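/- arXiv:2306.12494 — 2 statements merged into one kernel-verified Lean document; each statement's English description precedes it below -/
import Mathlib

section
/- Let K ⊆ ℝ² be a compact convex set with nonempty interior whose boundary ∂K is a C² curve of strictly positive curvature, let T be its outer billiard map on Ω := ℝ² ∖ K, and fix the origin 0 in the interior of K. Let C ⊆ Ω be the image of a continuous injective map of the circle into Ω which is non-contractible in Ω and satisfies T(C) = C. Then C is a star-shaped Lipschitz polar graph: there exists a Lipschitz, 2π-periodic function ρ : ℝ → (0,∞) such that C = { ρ(φ)(cos φ, sin φ) : φ ∈ ℝ }. -/
/-!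
Let `U` be the component of `0` in the complement of `C`. Non-contractibility of `C` in the exterior
of `K` forces `U` to be bounded (`isBounded_component`). The outer billiard map, extended by the
identity on `K`, is a homeomorphism `F` of the plane (`Body.homeo`). It preserves area outside `K`,
because in the tangential coordinates `(θ, t)` it reads `γ θ - t γ' θ ↦ γ θ + t γ' θ`
(`BdryCurve.volume_image`); it leaves `U` invariant; and it twists the rays issued from `0`
counterclockwise, while `F⁻¹` twists them clockwise (`Body.twist`). Strict convexity of `K`, needed
for these facts, follows from the existence of the map itself.

Star-shapedness of `U` (`TwistDom.subset_starPart_self`). If `U` is not star-shaped, some point `q`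
of `U` hidden from `0` is a limit of visible points lying on one side of its ray: a cliff. The
connected set `C` contains both ends of the radial crosscut through `q`, and a continuous branch of
`log ((z - a) / (z - b))` exists off `C` for `a`, `b` in `C`; so `U` cut along that crosscut reaches
it from the visible side only (`no_crossing`, `Dom.one_side`). If the visible side is the one towards
which `F` turns, images under `F` of visible segments cannot pass the crosscut
(`TwistDom.map_mem_core`), so `F⁻¹` maps the union `P` of the hidden components carrying such cliffs
into itself; and the twist puts `F⁻¹ q` off the closure of the visible part
(`TwistDom.symm_notMem_closure`). Near `F⁻¹ q` there is then a nonempty open subset of `P` outside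
`F⁻¹ P`. Its iterates under `F⁻¹` are disjoint, of equal area and contained in the bounded set `U`,
a contradiction. For the other side the roles of `F` and `F⁻¹` are exchanged.

Lipschitz bound. The part beyond `p ∈ C` of the ray through `p` lies outside `U`, and so does its
image under `F`, a curve issued from `F p` which turns counterclockwise at a rate bounded below
(`Body.exists_growth`). It bounds the radial function of `U` on that side of `F p`, and `F⁻¹` does
the same on the other side (`Dom.radius_step`, `Dom.radius_lipschitz`).

Finally, the radial graph bounding `U` is contained in `C`, and it is all of `C`: a closed curve in
a proper subset of a circle takes equal values at some `φ` and `φ + π` (`surjective_of_antipodal`),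
whereas the radial graph does not.
-/


open Real MeasureTheory Set

noncomputable section

/-- Determinant of two plane vectors. -/
def detV (u v : ℝ × ℝ) : ℝ := u.1 * v.2 - u.2 * v.1

/-- The unit vector of polar angle `φ`. -/
def uVec (φ : ℝ) : ℝ × ℝ := (Real.cos φ, Real.sin φ)

/-- The boundary of `K` is a `C²` curve of strictly positive curvature, expressed through the
radial function `r` of `∂K` with respect to the interior point `O`. -/
def HasC2PosCurvBoundary (K : Set (ℝ × ℝ)) (O : ℝ × ℝ) (r : ℝ → ℝ) : Prop :=
  O ∈ interior K ∧ ContDiff ℝ 2 r ∧ (∀ φ, r (φ + 2 * π) = r φ) ∧ (∀ φ, 0 < r φ) ∧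
  (∀ φ, 0 < r φ ^ 2 + 2 * (deriv r φ) ^ 2 - r φ * deriv (deriv r) φ) ∧
  frontier K = {p | ∃ φ, p = O + r φ • uVec φ}

/-- `T` is the outer billiard map of `K`: for `A ∉ K`, the midpoint of `[A, T A]` lies on `∂K`,
the segment `[A, T A]` meets `K` exactly at this midpoint, and `K` lies to the left of the
oriented segment. -/
def IsOuterBilliard (K : Set (ℝ × ℝ)) (T : ℝ × ℝ → ℝ × ℝ) : Prop :=
  ∀ A, A ∉ K →
    T A ∉ K ∧
    (1 / 2 : ℝ) • (A + T A) ∈ frontier K ∧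
    segment ℝ A (T A) ∩ K = {(1 / 2 : ℝ) • (A + T A)} ∧
    ∀ k ∈ K, 0 ≤ detV (T A - A) (k - (1 / 2 : ℝ) • (A + T A))

/-- A set is an ellipse if it is the image of the unit circle under an invertible affine map. -/
def IsEllipse (C : Set (ℝ × ℝ)) : Prop :=
  ∃ (L : (ℝ × ℝ) →ₗ[ℝ] ℝ × ℝ) (c : ℝ × ℝ), Function.Bijective L ∧
    C = (fun x => c + L x) '' {x : ℝ × ℝ | x.1 ^ 2 + x.2 ^ 2 = 1}

/-- The polar dual of `C` with respect to `x`. -/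
def polarDual (C : Set (ℝ × ℝ)) (x : ℝ × ℝ) : Set (ℝ × ℝ) :=
  {y | ∀ c ∈ C, y.1 * (c.1 - x.1) + y.2 * (c.2 - x.2) ≤ 1}

/-- `x` is the Santalo point of `C`: the interior point minimizing the area of the polar dual. -/
def IsSantaloPoint (C : Set (ℝ × ℝ)) (x : ℝ × ℝ) : Prop :=
  x ∈ interior C ∧ ∀ y ∈ interior C, volume (polarDual C x) ≤ volume (polarDual C y)

/-- The data of a segment `[M₀, M₁]` with `Mᵢ` on the open ray of polar angle `φᵢ`,
tangent to `∂K` exactly at its midpoint. -/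
def SegData (K : Set (ℝ × ℝ)) (φ₀ φ₁ : ℝ) (M₀ M₁ : ℝ × ℝ) : Prop :=
  (∃ s > (0 : ℝ), M₀ = s • uVec φ₀) ∧ (∃ s > (0 : ℝ), M₁ = s • uVec φ₁) ∧
  (1 / 2 : ℝ) • (M₀ + M₁) ∈ frontier K ∧
  segment ℝ M₀ M₁ ∩ K = {(1 / 2 : ℝ) • (M₀ + M₁)}

/-- `S` is the generating function of the outer billiard of `K` (with respect to the origin `0`):
`S φ₀ φ₁` is the area of the triangle `0 M₀ M₁`. -/
def IsGenFun (K : Set (ℝ × ℝ)) (S : ℝ → ℝ → ℝ) : Prop :=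
  ∀ φ₀ φ₁ : ℝ, φ₀ < φ₁ → φ₁ < φ₀ + π →
    ∃ M₀ M₁, SegData K φ₀ φ₁ M₀ M₁ ∧ S φ₀ φ₁ = |detV M₀ M₁| / 2

/-- The angular configuration `φ : ℤ → ℝ` is locally minimizing for the generating function `S`. -/
def LocMinConfig (S : ℝ → ℝ → ℝ) (φ : ℤ → ℝ) : Prop :=
  ∀ M N : ℤ, M ≤ N →
    IsLocalMin (fun x : ℤ → ℝ =>
      S (φ (M - 1)) (x M) + (∑ i ∈ Finset.Icc M (N - 1), S (x i) (x (i + 1))) +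
        S (x N) (φ (N + 1))) φ

/-- `φ` is a choice of polar angles for the sequence `A`, with consecutive angles within `(0, π)`
of each other. -/
def IsPolarLift (A : ℤ → ℝ × ℝ) (φ : ℤ → ℝ) : Prop :=
  (∀ n, ∃ ρ > (0 : ℝ), A n = ρ • uVec (φ n)) ∧ ∀ n, φ n < φ (n + 1) ∧ φ (n + 1) < φ n + π

/-- Every orbit of the outer billiard map `T` is locally minimizing with respect to the
generating function `S`. -/
def AllOrbitsLocMin (K : Set (ℝ × ℝ)) (T : ℝ × ℝ → ℝ × ℝ) (S : ℝ → ℝ → ℝ) : Prop :=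
  ∀ A : ℤ → ℝ × ℝ, (∀ n, A n ∉ K) → (∀ n, A (n + 1) = T (A n)) →
    ∀ φ : ℤ → ℝ, IsPolarLift A φ → LocMinConfig S φ

/-! ### Winding of planar paths -/

/-- Separation constant between a compact set and a disjoint closed set. -/
lemma exists_pos_le_dist {E : Type*} [PseudoMetricSpace E] {Γ C : Set E} (hΓ : IsCompact Γ)
    (hC : IsClosed C) (hd : Disjoint Γ C) : ∃ δ > 0, ∀ z ∈ Γ, ∀ c ∈ C, δ ≤ dist z c := by
  obtain ⟨δ, hδ, h⟩ := hd.exists_thickenings hΓ hC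
  refine ⟨δ, hδ, fun z hz c hc => ?_⟩
  by_contra! hlt
  refine (Set.disjoint_left.1 h ?_) (Metric.self_subset_thickening hδ _ hc)
  exact Metric.mem_thickening_iff.2 ⟨z, hz, by rwa [dist_comm]⟩

/-- A connected closed set disjoint from the compact set `Γ` does not separate branches of the
logarithm: for `a`, `b` in it, `(z - a) / (z - b)` has a continuous logarithm on `Γ`. For close
`a`, `b` the principal branch works, and the property is transitive in `(a, b)`. -/
lemma exists_log_branch {C Γ : Set ℂ} (hC : IsPreconnected C) (hCc : IsClosed C)
    (hΓ : IsCompact Γ) (hd : Disjoint Γ C) {a b : ℂ} (ha : a ∈ C) (hb : b ∈ C) :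
    ∃ L : ℂ → ℂ, ContinuousOn L Γ ∧ ∀ z ∈ Γ, Complex.exp (L z) = (z - a) / (z - b) := by
  obtain ⟨δ, hδ, hdist⟩ := exists_pos_le_dist hΓ hCc hd
  have hne : ∀ z ∈ Γ, ∀ c ∈ C, z - c ≠ 0 := fun z hz c hc h => by
    have := hdist z hz c hc
    rw [dist_eq_norm, h, norm_zero] at this
    linarith
  refine hC.induction₂ (fun a b => ∃ L : ℂ → ℂ, ContinuousOn L Γ ∧
    ∀ z ∈ Γ, Complex.exp (L z) = (z - a) / (z - b)) ?_ ?_ ?_ ha hb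
  · intro x hx
    filter_upwards [self_mem_nhdsWithin, mem_nhdsWithin_of_mem_nhds (Metric.ball_mem_nhds x hδ)]
      with y hy hyx
    have key : ∀ z ∈ Γ, (z - x) / (z - y) ∈ Complex.slitPlane := by
      intro z hz
      have h1 : (z - x) / (z - y) = 1 + (y - x) / (z - y) := by
        field_simp [hne z hz y hy]
        ring
      rw [h1]
      apply Complex.mem_slitPlane_of_norm_lt_one
      rw [norm_div, div_lt_one (norm_pos_iff.2 (hne z hz y hy))]
      have h2 := hdist z hz y hy
      rw [Metric.mem_ball, dist_eq_norm] at hyx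
      rw [dist_eq_norm] at h2
      linarith
    refine ⟨fun z => Complex.log ((z - x) / (z - y)), ?_, fun z hz => ?_⟩
    · refine ContinuousOn.clog ?_ key
      exact (continuousOn_id.sub continuousOn_const).div (continuousOn_id.sub continuousOn_const)
        (fun z hz => hne z hz y hy)
    · exact Complex.exp_log (Complex.slitPlane_ne_zero (key z hz))
  · rintro x y z hx hy hz ⟨L, hL, hL'⟩ ⟨M, hM, hM'⟩
    refine ⟨fun w => L w + M w, hL.add hM, fun w hw => ?_⟩
    rw [Complex.exp_add, hL' w hw, hM' w hw, div_mul_div_cancel₀ (hne w hw y hy)]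
  · rintro x y hx hy ⟨L, hL, hL'⟩
    refine ⟨fun w => - L w, hL.neg, fun w hw => ?_⟩
    rw [Complex.exp_neg, hL' w hw, inv_div]

lemma quotient_mem_slitPlane {a b z : ℂ} (hb : z ≠ b) (hz : z ∉ segment ℝ a b) :
    (z - a) / (z - b) ∈ Complex.slitPlane := by
  rw [Complex.mem_slitPlane_iff_not_le_zero]
  intro h
  apply hz
  obtain ⟨h1, h2⟩ := Complex.le_def.1 h
  set s : ℝ := -((z - a) / (z - b)).re with hs
  have hs0 : 0 ≤ s := by rw [hs]; simpa using h1
  have hq : (z - a) / (z - b) = -(s : ℂ) := by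
    apply Complex.ext
    · simp [hs]
    · simpa using h2
  have hzb : z - b ≠ 0 := sub_ne_zero.2 hb
  rw [div_eq_iff hzb] at hq
  have hs1 : (1 + s) ≠ 0 := by positivity
  refine ⟨1 / (1 + s), s / (1 + s), by positivity, by positivity, by field_simp, ?_⟩
  have hs1' : (1 + (s : ℂ)) ≠ 0 := by exact_mod_cast hs1
  simp only [Complex.real_smul]
  push_cast
  field_simp
  linear_combination -hq

/-- If `a`, `b` belong to a connected set `C`, no compact set `Γ` disjoint from `C` can cross the
segment `[a, b]` from one side to the other at a point `w` while staying connected off the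
segment: the principal branch of `log ((z - a) / (z - b))` jumps across the segment, whereas
a continuous branch exists on `Γ`. -/
lemma no_crossing_complex {C Γ : Set ℂ} (hC : IsPreconnected C) (hCc : IsClosed C)
    (hΓ : IsCompact Γ) (hd : Disjoint Γ C) {a b w : ℂ} (ha : a ∈ C) (hb : b ∈ C)
    (hconn : IsPreconnected (Γ \ segment ℝ a b)) (hw : w ∈ Γ)
    (hre : ((w - a) / (w - b)).re < 0) (him : ((w - a) / (w - b)).im = 0)
    (hup : w ∈ closure (Γ ∩ {z | 0 < ((z - a) / (z - b)).im}))
    (hdown : w ∈ closure (Γ ∩ {z | ((z - a) / (z - b)).im < 0})) : False := by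
  obtain ⟨L, hL, hL'⟩ := exists_log_branch hC hCc hΓ hd ha hb
  have hne : ∀ z ∈ Γ, ∀ c ∈ C, z ≠ c := fun z hz c hc h =>
    Set.disjoint_left.1 hd hz (h ▸ hc)
  set f : ℂ → ℂ := fun z => (z - a) / (z - b) with hf
  have hfc : ContinuousOn f Γ :=
    (continuousOn_id.sub continuousOn_const).div (continuousOn_id.sub continuousOn_const)
      (fun z hz => sub_ne_zero.2 (hne z hz b hb))
  -- off the segment, the two logarithms differ by an integer multiple of `2 π i`
  have hint : ∀ z ∈ Γ, ∃ n : ℤ, (L z).im - (f z).arg = n * (2 * π) := by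
    intro z hz
    have hfz : f z ≠ 0 := div_ne_zero (sub_ne_zero.2 (hne z hz a ha)) (sub_ne_zero.2 (hne z hz b hb))
    have : Complex.exp (L z) = Complex.exp (Complex.log (f z)) := by
      rw [hL' z hz, Complex.exp_log hfz]
    obtain ⟨n, hn⟩ := Complex.exp_eq_exp_iff_exists_int.1 this
    refine ⟨n, ?_⟩
    rw [hn]
    simp [Complex.log_im]
  have hseg : ∀ z ∈ Γ, (f z).im ≠ 0 → z ∉ segment ℝ a b := by
    rintro z hz him ⟨s, t, hs, ht, hst, rfl⟩
    apply him
    have hs' : s = 1 - t := by linarith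
    have e1 : s • a + t • b - a = (t : ℂ) * (b - a) := by
      simp only [Complex.real_smul, hs']; push_cast; ring
    have e2 : s • a + t • b - b = ((-s : ℝ) : ℂ) * (b - a) := by
      have : t = 1 - s := by linarith
      simp only [Complex.real_smul, this]; push_cast; ring
    simp only [hf]
    rw [e1, e2]
    by_cases hba : b - a = 0
    · simp [hba]
    · rw [mul_div_mul_right _ _ hba, ← Complex.ofReal_div, Complex.ofReal_im]
  set T : Set ℝ := Set.range (fun n : ℤ => (n : ℝ))
  have hconst : ∀ x ∈ Γ \ segment ℝ a b, ∀ y ∈ Γ \ segment ℝ a b,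
      ((L x).im - (f x).arg) / (2 * π) = ((L y).im - (f y).arg) / (2 * π) := by
    intro x hx y hy
    refine hconn.constant_of_mapsTo (T := T)
      (f := fun x => ((L x).im - (f x).arg) / (2 * π)) ?_ ?_ ?_ hx hy
    · exact Int.isClosedEmbedding_coe_real.isEmbedding.isDiscrete_range
    · refine ContinuousOn.div_const (ContinuousOn.sub ?_ ?_) _
      · exact Complex.continuous_im.comp_continuousOn (hL.mono sdiff_subset)
      · intro z hz
        have : f z ∈ Complex.slitPlane := quotient_mem_slitPlane (hne z hz.1 b hb) hz.2
        exact (Complex.continuousAt_arg this).comp_continuousWithinAt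
          ((hfc z hz.1).mono sdiff_subset)
    · intro z hz
      obtain ⟨n, hn⟩ := hint z hz.1
      refine ⟨n, ?_⟩
      simp only [hn]
      field_simp
  have lim : ∀ (S : Set ℂ) (θ : ℝ), (∀ z ∈ S, z.im ≠ 0) →
      Filter.Tendsto Complex.arg (nhdsWithin (f w) S) (nhds θ) →
      w ∈ closure (Γ ∩ {z | f z ∈ S}) →
      ∃ x ∈ Γ \ segment ℝ a b, (L w).im - θ = (L x).im - (f x).arg := by
    intro S θ hS hlim hcl
    have hne' : (nhdsWithin w (Γ ∩ {z | f z ∈ S})).NeBot := mem_closure_iff_nhdsWithin_neBot.1 hcl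
    obtain ⟨x, hxΓ, hxS⟩ : (Γ ∩ {z | f z ∈ S}).Nonempty := by
      by_contra hem
      rw [Set.not_nonempty_iff_eq_empty] at hem
      rw [hem] at hcl
      simp at hcl
    have hx : x ∈ Γ \ segment ℝ a b := ⟨hxΓ, hseg x hxΓ (hS _ hxS)⟩
    refine ⟨x, hx, ?_⟩
    have t1 : Filter.Tendsto (fun z => (L z).im - (f z).arg)
        (nhdsWithin w (Γ ∩ {z | f z ∈ S})) (nhds ((L w).im - θ)) := by
      refine Filter.Tendsto.sub ?_ ?_
      · exact (Complex.continuous_im.tendsto _).comp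
          ((hL w hw).mono_left (nhdsWithin_mono _ inter_subset_left))
      · refine hlim.comp ?_
        refine tendsto_nhdsWithin_iff.2 ⟨(hfc w hw).mono_left (nhdsWithin_mono _ inter_subset_left), ?_⟩
        filter_upwards [self_mem_nhdsWithin] with z hz using hz.2
    have t2 : Filter.Tendsto (fun z => (L z).im - (f z).arg)
        (nhdsWithin w (Γ ∩ {z | f z ∈ S})) (nhds ((L x).im - (f x).arg)) := by
      refine tendsto_const_nhds.congr' ?_
      filter_upwards [self_mem_nhdsWithin] with z hz
      have := hconst x hx z ⟨hz.1, hseg z hz.1 (hS _ hz.2)⟩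
      have hpi : (2 * π) ≠ 0 := by positivity
      field_simp at this
      exact this
    exact tendsto_nhds_unique t1 t2
  obtain ⟨x, hx, ex⟩ := lim {z | 0 < z.im} π (fun z hz => ne_of_gt hz)
    ((Complex.tendsto_arg_nhdsWithin_im_nonneg_of_re_neg_of_im_zero hre him).mono_left
      (nhdsWithin_mono _ (fun z hz => by
        simp only [mem_ofPred_eq] at hz ⊢; exact hz.le))) hup
  obtain ⟨y, hy, ey⟩ := lim {z | z.im < 0} (-π) (fun z hz => ne_of_lt hz)
    (Complex.tendsto_arg_nhdsWithin_im_neg_of_re_neg_of_im_zero hre him) hdown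
  have := hconst x hx y hy
  rw [← ex, ← ey] at this
  have hpi := Real.pi_pos
  field_simp at this
  linarith

/-- Planar form of `no_crossing_complex` for a segment on a ray issued from the origin. -/
lemma no_crossing {C Γ : Set (ℝ × ℝ)} (hC : IsPreconnected C) (hCc : IsClosed C)
    (hΓ : IsCompact Γ) (hd : Disjoint Γ C) {q : ℝ × ℝ} {α β : ℝ} (hα : α < 1) (hβ : 1 < β)
    (ha : α • q ∈ C) (hb : β • q ∈ C)
    (hconn : IsPreconnected (Γ \ segment ℝ (α • q) (β • q))) (hq : q ∈ Γ)
    (hup : q ∈ closure (Γ ∩ {z | 0 < detV q z}))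
    (hdown : q ∈ closure (Γ ∩ {z | detV q z < 0})) : False := by
  set e := Complex.equivRealProdCLM.symm with he
  have eq : ∀ p : ℝ × ℝ, e p = ⟨p.1, p.2⟩ := fun p => by
    apply Complex.ext <;> simp [he]
  have hdisj : ∀ z ∈ Γ, z ≠ β • q := fun z hz h => Set.disjoint_left.1 hd hz (h ▸ hb)
  have him : ∀ z ∈ Γ, ∃ r > 0, ((e z - e (α • q)) / (e z - e (β • q))).im = - r * detV q z := by
    intro z hz
    have hne : e z - e (β • q) ≠ 0 := fun h => hdisj z hz (e.injective (sub_eq_zero.1 h))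
    have hn : 0 < Complex.normSq (e z - e (β • q)) := Complex.normSq_pos.2 hne
    refine ⟨(β - α) / Complex.normSq (e z - e (β • q)), by apply div_pos _ hn; linarith, ?_⟩
    rw [Complex.div_im]
    field_simp
    simp only [eq, detV, Prod.smul_fst, Prod.smul_snd, smul_eq_mul, Complex.sub_re, Complex.sub_im]
    ring
  have hq0 : q ≠ 0 := by
    rintro rfl
    exact hdisj 0 hq (by simp)
  have hquot : (e q - e (α • q)) / (e q - e (β • q)) = (((1 - α) / (1 - β) : ℝ) : ℂ) := by
    have h0 : e q ≠ 0 := fun h => hq0 (e.injective (by rw [h, map_zero]))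
    rw [map_smul, map_smul, Complex.real_smul, Complex.real_smul]
    have h1 : e q - (α : ℂ) * e q = ((1 - α : ℝ) : ℂ) * e q := by push_cast; ring
    have h2 : e q - (β : ℂ) * e q = ((1 - β : ℝ) : ℂ) * e q := by push_cast; ring
    rw [h1, h2, mul_div_mul_right _ _ h0, Complex.ofReal_div]
  have hseg : e '' segment ℝ (α • q) (β • q) = segment ℝ (e (α • q)) (e (β • q)) :=
    image_segment ℝ (e.toLinearEquiv.toLinearMap.toAffineMap) _ _
  have hcl : ∀ S : Set (ℝ × ℝ), ∀ S' : Set ℂ, (∀ z ∈ S, e z ∈ S') → q ∈ closure S →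
      e q ∈ closure S' := by
    intro S S' h hqS
    exact closure_mono (by rintro _ ⟨z, hz, rfl⟩; exact h z hz)
      (image_closure_subset_closure_image e.continuous ⟨q, hqS, rfl⟩)
  refine no_crossing_complex (C := e '' C) (Γ := e '' Γ) (a := e (α • q)) (b := e (β • q)) (w := e q)
    (hC.image _ e.continuous.continuousOn) (e.toHomeomorph.isClosedMap _ hCc)
    (hΓ.image e.continuous) ((Set.disjoint_image_iff e.injective).2 hd) ⟨_, ha, rfl⟩ ⟨_, hb, rfl⟩
    ?_ ⟨q, hq, rfl⟩ ?_ ?_ ?_ ?_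
  · rw [← hseg, ← Set.image_sdiff e.injective]
    exact hconn.image _ e.continuous.continuousOn
  · rw [hquot, Complex.ofReal_re]
    exact div_neg_of_pos_of_neg (by linarith) (by linarith)
  · rw [hquot, Complex.ofReal_im]
  · refine hcl _ _ ?_ hdown
    rintro z ⟨hz, hz'⟩
    refine ⟨⟨z, hz, rfl⟩, ?_⟩
    obtain ⟨r, hr, h⟩ := him z hz
    simp only [mem_ofPred_eq] at hz' ⊢
    rw [h]
    nlinarith
  · refine hcl _ _ ?_ hup
    rintro z ⟨hz, hz'⟩
    refine ⟨⟨z, hz, rfl⟩, ?_⟩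
    obtain ⟨r, hr, h⟩ := him z hz
    simp only [mem_ofPred_eq] at hz' ⊢
    rw [h]
    nlinarith

/-! ### Domains and their star-shaped cores -/

/-- The part of `U` visible from the origin. -/
def starPart (U : Set (ℝ × ℝ)) : Set (ℝ × ℝ) := {x | ∀ t ∈ Icc (0 : ℝ) 1, t • x ∈ U}

/-- The radial crosscut of `U` through `q`: the component containing `q` of the trace of `U` on the
open ray of `q`. -/
def crosscut (U : Set (ℝ × ℝ)) (q : ℝ × ℝ) : Set (ℝ × ℝ) :=
  {x | ∃ t > (0 : ℝ), x = t • q ∧ ∀ s ∈ uIcc 1 t, s • q ∈ U}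

/-- The component containing the origin of `U` cut along the radial crosscut through `q`. -/
def core (U : Set (ℝ × ℝ)) (q : ℝ × ℝ) : Set (ℝ × ℝ) :=
  connectedComponentIn (U \ crosscut U q) 0

/-- A bounded connected open neighbourhood `U` of the origin whose frontier lies in a closed
connected set `C` disjoint from `U`. -/
structure Dom (U C : Set (ℝ × ℝ)) : Prop where
  isOpen : IsOpen U
  preconn : IsPreconnected U
  bdd : Bornology.IsBounded U
  front : frontier U ⊆ C
  disj : Disjoint U C
  Cconn : IsPreconnected C
  Cclosed : IsClosed C
  zero : (0 : ℝ × ℝ) ∈ U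

section Domain

variable {U C : Set (ℝ × ℝ)}

lemma starPart_subset : starPart U ⊆ U := fun x hx => by
  simpa using hx 1 (by simp)

lemma smul_mem_starPart {x : ℝ × ℝ} (hx : x ∈ starPart U) {c : ℝ} (h0 : 0 ≤ c) (h1 : c ≤ 1) :
    c • x ∈ starPart U := by
  intro t ht
  rw [smul_smul]
  exact hx _ ⟨mul_nonneg ht.1 h0, mul_le_one₀ ht.2 h0 h1⟩

lemma Dom.zero_mem_starPart (h : Dom U C) : (0 : ℝ × ℝ) ∈ starPart U := fun t _ => by
  simpa using h.zero

lemma Dom.isOpen_starPart (h : Dom U C) : IsOpen (starPart U) := by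
  rw [isOpen_iff_mem_nhds]
  intro x hx
  have := isCompact_Icc (a := (0 : ℝ)) (b := 1)
  refine this.eventually_forall_of_forall_eventually (P := fun y t => t • y ∈ U) ?_
  intro t ht
  have hc : Continuous (fun z : (ℝ × ℝ) × ℝ => z.2 • z.1) := by fun_prop
  exact hc.continuousAt.eventually_mem (h.isOpen.mem_nhds (hx t ht))

lemma preconn_starPart : IsPreconnected (starPart U) := by
  refine isPreconnected_of_forall 0 fun x hx => ⟨segment ℝ 0 x, ?_, left_mem_segment _ _ _,
    right_mem_segment _ _ _, (convex_segment _ _).isPreconnected⟩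
  rw [segment_eq_image]
  rintro _ ⟨t, ht, rfl⟩
  simpa using smul_mem_starPart hx ht.1 ht.2

lemma mem_crosscut_self {q : ℝ × ℝ} (hq : q ∈ U) : q ∈ crosscut U q :=
  ⟨1, one_pos, by simp, by simpa using hq⟩

lemma crosscut_subset {q : ℝ × ℝ} : crosscut U q ⊆ U := by
  rintro _ ⟨t, ht, rfl, h⟩
  exact h _ right_mem_uIcc

lemma detV_crosscut {q w x : ℝ × ℝ} (hw : w ∈ crosscut U q) : ∃ t > 0, detV w x = t * detV q x := by
  obtain ⟨t, ht, rfl, h⟩ := hw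
  exact ⟨t, ht, by simp only [detV, Prod.smul_fst, Prod.smul_snd, smul_eq_mul]; ring⟩

lemma crosscut_symm {q w : ℝ × ℝ} (hw : w ∈ crosscut U q) : q ∈ crosscut U w := by
  obtain ⟨t, ht, rfl, h⟩ := hw
  refine ⟨t⁻¹, by positivity, by rw [smul_smul, inv_mul_cancel₀ ht.ne', one_smul], fun s hs => ?_⟩
  rw [smul_smul]
  apply h
  rw [mem_uIcc] at hs ⊢
  rcases hs with ⟨h1, h2⟩ | ⟨h1, h2⟩
  · right
    have := mul_le_mul_of_nonneg_right h1 ht.le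
    have := mul_le_mul_of_nonneg_right h2 ht.le
    rw [inv_mul_cancel₀ ht.ne'] at this
    constructor <;> linarith
  · left
    have := mul_le_mul_of_nonneg_right h1 ht.le
    rw [inv_mul_cancel₀ ht.ne'] at this
    have := mul_le_mul_of_nonneg_right h2 ht.le
    constructor <;> linarith

lemma crosscut_trans {q w x : ℝ × ℝ} (hw : w ∈ crosscut U q) (hx : x ∈ crosscut U w) :
    x ∈ crosscut U q := by
  obtain ⟨t, ht, rfl, h⟩ := hw
  obtain ⟨r, hr, rfl, h'⟩ := hx
  refine ⟨r * t, by positivity, by rw [smul_smul], fun s hs => ?_⟩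
  by_cases hst : s ∈ uIcc 1 t
  · exact h s hst
  · have := h' (s / t) ?_
    · rwa [smul_smul, div_mul_cancel₀ _ ht.ne'] at this
    · rw [mem_uIcc] at hs hst ⊢
      rw [le_div_iff₀ ht, div_le_iff₀ ht, le_div_iff₀ ht, div_le_iff₀ ht]
      push Not at hst
      rcases hs with ⟨h1, h2⟩ | ⟨h1, h2⟩
      · left; have := hst.1 h1; constructor <;> linarith
      · right
        have : s < t := by
          by_contra! h3
          have := hst.2 h3
          linarith
        constructor <;> linarith

lemma crosscut_eq {q w : ℝ × ℝ} (hw : w ∈ crosscut U q) : crosscut U w = crosscut U q :=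
  Subset.antisymm (fun _ hx => crosscut_trans hw hx)
    (fun _ hx => crosscut_trans (crosscut_symm hw) hx)

lemma core_eq {q w : ℝ × ℝ} (hw : w ∈ crosscut U q) : core U w = core U q := by
  rw [core, core, crosscut_eq hw]

lemma disjoint_starPart_crosscut {q : ℝ × ℝ} (hq : q ∉ starPart U) {x : ℝ × ℝ}
    (hx : x ∈ starPart U) : x ∉ crosscut U q := by
  rintro ⟨t, ht, rfl, h⟩
  apply hq
  intro s hs
  by_cases hst : s ≤ t
  · have := hx (s / t) ⟨div_nonneg hs.1 ht.le, by rwa [div_le_one ht]⟩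
    rwa [smul_smul, div_mul_cancel₀ _ ht.ne'] at this
  · exact h s (by rw [mem_uIcc]; right; exact ⟨le_of_not_ge hst, hs.2⟩)

/-- A radial crosscut hidden from the origin is an open segment with both endpoints in `C`. -/
lemma Dom.exists_ends (h : Dom U C) {q : ℝ × ℝ} (hq : q ∈ U) (hqA : q ∉ starPart U) :
    ∃ α β : ℝ, 0 < α ∧ α < 1 ∧ 1 < β ∧ α • q ∈ C ∧ β • q ∈ C ∧
      crosscut U q = U ∩ segment ℝ (α • q) (β • q) := by
  have hcont : Continuous (fun t : ℝ => t • q) := by fun_prop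
  have hq0 : q ≠ 0 := by rintro rfl; exact hqA h.zero_mem_starPart
  have hcl : IsClosed {t : ℝ | t • q ∉ U} :=
    (h.isOpen.preimage hcont).isClosed_compl
  -- the last obstacle below `q`
  obtain ⟨α, ⟨hα, hαU⟩, hαmax⟩ := ((isCompact_Icc (a := (0 : ℝ)) (b := 1)).inter_right
    hcl).exists_isGreatest (by
      simp only [starPart, mem_ofPred_eq] at hqA
      push Not at hqA
      obtain ⟨t, ht, ht'⟩ := hqA
      exact ⟨t, ht, ht'⟩)
  -- the first obstacle above `q`
  obtain ⟨R, hR⟩ := h.bdd.exists_norm_le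
  have hqn : 0 < ‖q‖ := norm_pos_iff.2 hq0
  have hM : ((|R| + 1) / ‖q‖) • q ∉ U := by
    intro hU
    have := hR _ hU
    rw [norm_smul, norm_div, norm_norm, div_mul_cancel₀ _ hqn.ne', Real.norm_eq_abs] at this
    have h2 := le_abs_self (|R| + 1)
    have := le_abs_self R
    linarith
  have hM1 : 1 ≤ (|R| + 1) / ‖q‖ := by
    rw [le_div_iff₀ hqn]
    have := hR q hq
    have := le_abs_self R
    linarith
  obtain ⟨β, ⟨hβ, hβU⟩, hβmin⟩ := ((isCompact_Icc (a := (1 : ℝ))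
    (b := (|R| + 1) / ‖q‖)).inter_right hcl).exists_isLeast ⟨_, ⟨hM1, le_rfl⟩, hM⟩
  simp only [mem_ofPred_eq] at hαU hβU
  have hα0 : 0 < α := lt_of_le_of_ne hα.1 (by rintro rfl; exact hαU (by simpa using h.zero))
  have hα1 : α < 1 := lt_of_le_of_ne hα.2 (by rintro rfl; exact hαU (by simpa using hq))
  have hβ1 : 1 < β := lt_of_le_of_ne hβ.1 (by rintro rfl; exact hβU (by simpa using hq))
  have hin : ∀ t ∈ Ioo α β, t • q ∈ U := by
    intro t ht
    by_contra hU
    rcases le_total t 1 with h1 | h1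
    · exact absurd (hαmax ⟨⟨hα0.le.trans ht.1.le, h1⟩, hU⟩) (not_le.2 ht.1)
    · exact absurd (hβmin ⟨⟨h1, ht.2.le.trans hβ.2⟩, hU⟩) (not_le.2 ht.2)
  have hfr : ∀ t ∈ Icc α β, t • q ∉ U → t • q ∈ C := by
    intro t ht hU
    apply h.front
    refine ⟨?_, fun hi => hU (interior_subset hi)⟩
    rw [← closure_Ioo (by linarith : α ≠ β)] at ht
    exact closure_mono (by rintro _ ⟨s, hs, rfl⟩; exact hin s hs)
      (image_closure_subset_closure_image hcont ⟨t, ht, rfl⟩)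
  refine ⟨α, β, hα0, hα1, hβ1, hfr α (by constructor <;> linarith) hαU,
    hfr β (by constructor <;> linarith) hβU, ?_⟩
  have hseg : segment ℝ (α • q) (β • q) = (fun t : ℝ => t • q) '' Icc α β := by
    rw [← segment_eq_Icc (by linarith)]
    exact (image_segment ℝ ((LinearMap.toSpanSingleton ℝ (ℝ × ℝ) q).toAffineMap) α β).symm
  rw [hseg]
  ext x
  constructor
  · rintro ⟨t, ht, rfl, hs⟩
    refine ⟨hs t right_mem_uIcc, t, ?_, rfl⟩
    constructor
    · by_contra! hlt
      exact hαU (hs α (by rw [mem_uIcc]; right; constructor <;> linarith))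
    · by_contra! hlt
      exact hβU (hs β (by rw [mem_uIcc]; left; constructor <;> linarith))
  · rintro ⟨hU, t, ht, rfl⟩
    have h1 : t ≠ α := by rintro rfl; exact hαU hU
    have h2 : t ≠ β := by rintro rfl; exact hβU hU
    have h1' := lt_of_le_of_ne ht.1 h1.symm
    have h2' := lt_of_le_of_ne ht.2 h2
    refine ⟨t, by linarith, rfl, fun s hs => hin s ?_⟩
    rw [mem_uIcc] at hs
    rcases hs with hs | hs <;> constructor <;> linarith [hs.1, hs.2]

lemma Dom.isOpen_sdiff_crosscut (h : Dom U C) {q : ℝ × ℝ} (hq : q ∈ U) (hqA : q ∉ starPart U) :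
    IsOpen (U \ crosscut U q) := by
  obtain ⟨α, β, -, -, -, -, -, e⟩ := h.exists_ends hq hqA
  rw [e, sdiff_self_inter]
  refine h.isOpen.sdiff ?_
  rw [segment_eq_image]
  exact (isCompact_Icc.image (by fun_prop)).isClosed

lemma Dom.isOpen_core (h : Dom U C) {q : ℝ × ℝ} (hq : q ∈ U) (hqA : q ∉ starPart U) : IsOpen (core U q) :=
  (h.isOpen_sdiff_crosscut hq hqA).connectedComponentIn

lemma core_subset {q : ℝ × ℝ} : core U q ⊆ U \ crosscut U q := connectedComponentIn_subset _ _

lemma subset_core {q : ℝ × ℝ} {S : Set (ℝ × ℝ)} (hS : IsPreconnected S) (hSU : S ⊆ U)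
    (hSd : ∀ x ∈ S, x ∉ crosscut U q) (hne : (S ∩ core U q).Nonempty) : S ⊆ core U q := by
  obtain ⟨x, hxS, hx⟩ := hne
  rw [core, connectedComponentIn_eq hx]
  exact hS.subset_connectedComponentIn hxS fun y hy => ⟨hSU hy, hSd y hy⟩

lemma Dom.starPart_subset_core (h : Dom U C) {q : ℝ × ℝ} (hqA : q ∉ starPart U) : starPart U ⊆ core U q :=
  preconn_starPart.subset_connectedComponentIn h.zero_mem_starPart fun _ hy =>
    ⟨starPart_subset hy, disjoint_starPart_crosscut hqA hy⟩

/-- The component of the origin in the cut domain is bounded, within `U`, by the crosscut only. -/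
lemma Dom.mem_crosscut_of_closure (h : Dom U C) {q y : ℝ × ℝ} (hq : q ∈ U) (hqA : q ∉ starPart U) (hy : y ∈ U)
    (hcl : y ∈ closure (core U q)) (hn : y ∉ core U q) : y ∈ crosscut U q := by
  by_contra hyc
  have ho := (h.isOpen_sdiff_crosscut hq hqA)
  have ho' := ho.connectedComponentIn (x := y)
  obtain ⟨x, hx1, hx2⟩ := mem_closure_iff.1 hcl _ ho' (mem_connectedComponentIn ⟨hy, hyc⟩)
  apply hn
  rw [core, connectedComponentIn_eq hx2, ← connectedComponentIn_eq hx1]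
  exact mem_connectedComponentIn ⟨hy, hyc⟩

/-- Points of an open convex subset of `U` around `q` that lie on the ray of `q` belong to the
crosscut through `q`. -/
lemma Dom.mem_crosscut_of_detV_eq_zero (h : Dom U C) {q x : ℝ × ℝ} (hqA : q ∉ starPart U) {W : Set (ℝ × ℝ)}
    (hW : Convex ℝ W) (hWU : W ⊆ U) (hqW : q ∈ W) (hx : x ∈ W) (hd : detV q x = 0) :
    x ∈ crosscut U q := by
  have hq0 : q ≠ 0 := by rintro rfl; exact hqA h.zero_mem_starPart
  obtain ⟨t, rfl⟩ : ∃ t : ℝ, x = t • q := by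
    have hpos : 0 < q.1 ^ 2 + q.2 ^ 2 := by
      by_contra hcon
      apply hq0
      have h1 : q.1 = 0 := by nlinarith [sq_nonneg q.1, sq_nonneg q.2]
      have h2 : q.2 = 0 := by nlinarith [sq_nonneg q.1, sq_nonneg q.2]
      exact Prod.ext h1 h2
    refine ⟨(x.1 * q.1 + x.2 * q.2) / (q.1 ^ 2 + q.2 ^ 2), ?_⟩
    simp only [detV] at hd
    ext <;> simp only [Prod.smul_fst, Prod.smul_snd, smul_eq_mul] <;> field_simp
    · linear_combination -q.2 * hd
    · linear_combination q.1 * hd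
  have hin : ∀ s ∈ uIcc 1 t, s • q ∈ W := by
    intro s hs
    rw [← segment_eq_uIcc] at hs
    have := mem_image_of_mem (LinearMap.toSpanSingleton ℝ (ℝ × ℝ) q).toAffineMap hs
    rw [image_segment] at this
    apply hW.segment_subset hqW hx
    simpa using this
  refine ⟨t, ?_, rfl, fun s hs => hWU (hin s hs)⟩
  by_contra! ht
  apply hqA
  intro s hs
  exact hWU (hin s (by rw [mem_uIcc]; right; exact ⟨ht.trans hs.1, hs.2⟩))

end Domain

/-! ### The cliff -/

section Cliffs

variable {U C : Set (ℝ × ℝ)}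

lemma detV_lineMap (q x : ℝ × ℝ) (s : ℝ) :
    detV q (AffineMap.lineMap x q s) = (1 - s) * detV q x := by
  simp only [detV, AffineMap.lineMap_apply, vsub_eq_sub, vadd_eq_add, Prod.smul_fst,
    Prod.smul_snd, Prod.fst_add, Prod.snd_add, Prod.fst_sub, Prod.snd_sub, smul_eq_mul]
  ring

lemma mem_closure_lineMap_Ico (q x : ℝ × ℝ) :
    q ∈ closure ((AffineMap.lineMap x q : ℝ → ℝ × ℝ) '' Ico (0 : ℝ) 1) := by
  have h1 : (1 : ℝ) ∈ closure (Ico (0 : ℝ) 1) := by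
    rw [closure_Ico (by norm_num)]; simp
  have := image_closure_subset_closure_image
    (f := (AffineMap.lineMap x q : ℝ → ℝ × ℝ)) AffineMap.lineMap_continuous ⟨1, h1, rfl⟩
  simpa using this

lemma detV_continuous {X : Type*} [TopologicalSpace X] {f g : X → ℝ × ℝ} (hf : Continuous f)
    (hg : Continuous g) : Continuous fun x => detV (f x) (g x) := by
  unfold detV; fun_prop

lemma detV_swap (u v : ℝ × ℝ) : detV u v = -detV v u := by
  simp only [detV]; ring

lemma detV_smul_smul (a b : ℝ) (u v : ℝ × ℝ) : detV (a • u) (b • v) = a * b * detV u v := by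
  simp only [detV, Prod.smul_fst, Prod.smul_snd, smul_eq_mul]; ring

/-- The component of the origin reaches a hidden crosscut from one side only: otherwise a loop in
`U` would cross the ray of `q` exactly once, between two points of the connected set `C`. -/
lemma Dom.one_side_aux (h : Dom U C) {q : ℝ × ℝ} (hq : q ∈ U) (hqA : q ∉ starPart U)
    {W : Set (ℝ × ℝ)} (hW : Convex ℝ W) (hWU : W ⊆ U) (hqW : q ∈ W) {x y : ℝ × ℝ}
    (hx : x ∈ W) (hxN : x ∈ core U q) (hxd : 0 < detV q x)
    (hy : y ∈ W) (hyN : y ∈ core U q) (hyd : detV q y < 0) : False := by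
  obtain ⟨α, β, hα, hα1, hβ, hαC, hβC, e⟩ := h.exists_ends hq hqA
  have hconn : IsConnected (core U q) := ⟨⟨x, hxN⟩, isPreconnected_connectedComponentIn⟩
  have hpc := (h.isOpen_core hq hqA).isConnected_iff_isPathConnected.1 hconn
  obtain ⟨γ, hγ⟩ := hpc.joinedIn x hxN y hyN
  set L := fun z : ℝ × ℝ => (AffineMap.lineMap z q : ℝ → ℝ × ℝ) with hL
  have hLc : ∀ z, Continuous (L z) := fun z => AffineMap.lineMap_continuous
  have hLU : ∀ z ∈ W, ∀ s ∈ Icc (0 : ℝ) 1, L z s ∈ U := fun z hz s hs =>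
    hWU (hW.segment_subset hz hqW (by
      rw [segment_eq_image_lineMap]; exact mem_image_of_mem _ hs))
  have hseg0 : ∀ z ∈ segment ℝ (α • q) (β • q), detV q z = 0 := by
    rintro _ ⟨a, b, -, -, -, rfl⟩
    simp only [detV, Prod.smul_fst, Prod.smul_snd, Prod.fst_add, Prod.snd_add, smul_eq_mul]
    ring
  have hsegq : q ∈ segment ℝ (α • q) (β • q) := by
    have : q ∈ U ∩ segment ℝ (α • q) (β • q) := e ▸ mem_crosscut_self hq
    exact this.2
  have hsub : ∀ z, L z '' Ico 0 1 ⊆ L z '' Icc 0 1 := fun z => image_mono Ico_subset_Icc_self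
  refine no_crossing (C := C) (Γ := range γ ∪ L x '' Icc 0 1 ∪ L y '' Icc 0 1) (q := q) h.Cconn
    h.Cclosed (((isCompact_range γ.continuous).union (isCompact_Icc.image (hLc x))).union
      (isCompact_Icc.image (hLc y))) ?_ hα1 hβ hαC hβC ?_ ?_ ?_ ?_
  · refine h.disj.mono_left ?_
    rintro z ((⟨t, rfl⟩ | ⟨s, hs, rfl⟩) | ⟨s, hs, rfl⟩)
    · exact (core_subset (hγ t)).1
    · exact hLU x hx s hs
    · exact hLU y hy s hs
  · have heq : (range γ ∪ L x '' Icc 0 1 ∪ L y '' Icc 0 1) \ segment ℝ (α • q) (β • q)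
        = range γ ∪ L x '' Ico 0 1 ∪ L y '' Ico 0 1 := by
      ext z
      constructor
      · have hne : ∀ w : ℝ × ℝ, ∀ s ∈ Icc (0 : ℝ) 1, L w s ∉ segment ℝ (α • q) (β • q) →
            s ∈ Ico (0 : ℝ) 1 := by
          intro w s hs hn
          refine ⟨hs.1, lt_of_le_of_ne hs.2 ?_⟩
          rintro rfl
          exact hn (by simpa [hL] using hsegq)
        rintro ⟨(hz | ⟨s, hs, rfl⟩) | ⟨s, hs, rfl⟩, hn⟩
        · exact .inl (.inl hz)
        · exact .inl (.inr ⟨s, hne x s hs hn, rfl⟩)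
        · exact .inr ⟨s, hne y s hs hn, rfl⟩
      · rintro ((⟨t, rfl⟩ | ⟨s, hs, rfl⟩) | ⟨s, hs, rfl⟩)
        · refine ⟨.inl (.inl ⟨t, rfl⟩), fun hs => ?_⟩
          have := core_subset (hγ t)
          exact this.2 (e ▸ ⟨this.1, hs⟩)
        · refine ⟨.inl (.inr (hsub x ⟨s, hs, rfl⟩)), fun hn => ?_⟩
          have := hseg0 _ hn
          rw [detV_lineMap] at this
          have h2 := mul_pos (sub_pos.2 hs.2) hxd
          linarith
        · refine ⟨.inr (hsub y ⟨s, hs, rfl⟩), fun hn => ?_⟩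
          have := hseg0 _ hn
          rw [detV_lineMap] at this
          have h2 := mul_neg_of_pos_of_neg (sub_pos.2 hs.2) hyd
          linarith
    rw [heq]
    have hpre : ∀ z, IsPreconnected (L z '' Ico 0 1) := fun z =>
      isPreconnected_Ico.image _ (hLc z).continuousOn
    refine IsPreconnected.union y (.inl ⟨1, by simp⟩) ⟨0, by simp, by simp [hL]⟩ ?_ (hpre y)
    exact IsPreconnected.union x ⟨0, by simp⟩ ⟨0, by simp, by simp [hL]⟩
      (isPreconnected_range γ.continuous) (hpre x)
  · exact .inl (.inr ⟨1, by simp, by simp [hL]⟩)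
  · refine closure_mono ?_ (mem_closure_lineMap_Ico q x)
    rintro _ ⟨s, hs, rfl⟩
    refine ⟨.inl (.inr (hsub x ⟨s, hs, rfl⟩)), ?_⟩
    rw [mem_ofPred_eq, detV_lineMap]
    exact mul_pos (sub_pos.2 hs.2) hxd
  · refine closure_mono ?_ (mem_closure_lineMap_Ico q y)
    rintro _ ⟨s, hs, rfl⟩
    refine ⟨.inr (hsub y ⟨s, hs, rfl⟩), ?_⟩
    rw [mem_ofPred_eq, detV_lineMap]
    exact mul_neg_of_pos_of_neg (sub_pos.2 hs.2) hyd

lemma Dom.one_side (h : Dom U C) {σ : ℝ} (hσ : σ = 1 ∨ σ = -1) {q : ℝ × ℝ} (hq : q ∈ U)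
    (hqA : q ∉ starPart U) {W : Set (ℝ × ℝ)} (hW : Convex ℝ W) (hWU : W ⊆ U) (hqW : q ∈ W)
    {x y : ℝ × ℝ} (hx : x ∈ W) (hxN : x ∈ core U q) (hxd : 0 < σ * detV q x)
    (hy : y ∈ W) (hyN : y ∈ core U q) (hyd : σ * detV q y < 0) : False := by
  rcases hσ with rfl | rfl
  · exact h.one_side_aux hq hqA hW hWU hqW hx hxN (by linarith) hy hyN (by linarith)
  · exact h.one_side_aux hq hqA hW hWU hqW hy hyN (by linarith) hx hxN (by linarith)

/-- `q` is a hidden point of `U` that is a limit of visible points lying on the side `σ = ±1` of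
its ray (`σ = 1` is the counterclockwise side). -/
def cliff (U : Set (ℝ × ℝ)) (σ : ℝ) (q : ℝ × ℝ) : Prop :=
  q ∈ U ∧ q ∉ starPart U ∧ q ∈ closure (starPart U ∩ {x | 0 < σ * detV q x})

lemma Dom.exists_ball (h : Dom U C) {q : ℝ × ℝ} (hq : q ∈ U) :
    ∃ W : Set (ℝ × ℝ), IsOpen W ∧ Convex ℝ W ∧ W ⊆ U ∧ q ∈ W := by
  obtain ⟨r, hr, hW⟩ := Metric.isOpen_iff.1 h.isOpen q hq
  exact ⟨_, Metric.isOpen_ball, convex_ball q r, hW, Metric.mem_ball_self hr⟩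

lemma Dom.cliff_or (h : Dom U C) {q : ℝ × ℝ} (hq : q ∈ U) (hqA : q ∉ starPart U)
    (hcl : q ∈ closure (starPart U)) : cliff U 1 q ∨ cliff U (-1) q := by
  obtain ⟨W, hWo, hW, hWU, hqW⟩ := h.exists_ball hq
  have h1 := hWo.inter_closure ⟨hqW, hcl⟩
  have h2 : W ∩ starPart U ⊆ (starPart U ∩ {x | 0 < 1 * detV q x}) ∪
      (starPart U ∩ {x | 0 < (-1) * detV q x}) := by
    rintro x ⟨hxW, hxA⟩
    rcases lt_trichotomy (detV q x) 0 with hd | hd | hd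
    · exact .inr ⟨hxA, by simp only [mem_ofPred_eq]; linarith⟩
    · exact absurd (h.mem_crosscut_of_detV_eq_zero hqA hW hWU hqW hxW hd)
        (disjoint_starPart_crosscut hqA hxA)
    · exact .inl ⟨hxA, by simp only [mem_ofPred_eq]; linarith⟩
  have h3 := closure_mono h2 h1
  rw [closure_union] at h3
  exact h3.imp (fun h => ⟨hq, hqA, h⟩) (fun h => ⟨hq, hqA, h⟩)

/-- Near a cliff of sign `σ`, the component of the origin cut along the crosscut stays on the
closed side `σ`. -/
lemma Dom.cliff_side (h : Dom U C) {σ : ℝ} (hσ : σ = 1 ∨ σ = -1) {q : ℝ × ℝ} (hc : cliff U σ q)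
    {W : Set (ℝ × ℝ)} (hWo : IsOpen W) (hW : Convex ℝ W) (hWU : W ⊆ U) (hqW : q ∈ W) {y : ℝ × ℝ}
    (hy : y ∈ W) (hyN : y ∈ core U q) : 0 ≤ σ * detV q y := by
  by_contra! hd
  obtain ⟨x, hxW, hxA, hx⟩ := mem_closure_iff.1 hc.2.2 W hWo hqW
  exact h.one_side hσ hc.1 hc.2.1 hW hWU hqW hxW (h.starPart_subset_core hc.2.1 hxA) hx hy hyN hd

/-- Near a cliff, the whole side facing the visible region is visible. -/
lemma Dom.cliff_eventually (h : Dom U C) {σ : ℝ} (hσ : σ = 1 ∨ σ = -1) {q : ℝ × ℝ}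
    (hc : cliff U σ q) : ∀ᶠ x in nhds q, 0 < σ * detV q x → x ∈ starPart U := by
  obtain ⟨W, hWo, hW, hWU, hqW⟩ := h.exists_ball hc.1
  obtain ⟨a, haW, haA, ha⟩ := mem_closure_iff.1 hc.2.2 W hWo hqW
  have ho : ∀ b : ℝ × ℝ, IsOpen {x : ℝ × ℝ | 0 < σ * detV x b} := fun b =>
    isOpen_lt continuous_const (continuous_const.mul (detV_continuous continuous_id
      continuous_const))
  filter_upwards [hWo.mem_nhds hqW, (ho a).mem_nhds ha] with x hxW hxa hqx
  by_contra hxA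
  have hxa' : 0 < σ * detV x a := hxa
  have ho' : IsOpen {z : ℝ × ℝ | σ * detV x z < 0} :=
    isOpen_lt (continuous_const.mul (detV_continuous continuous_const continuous_id))
      continuous_const
  obtain ⟨b, ⟨hbW, hb⟩, hbA, -⟩ := mem_closure_iff.1 hc.2.2 _ (hWo.inter ho')
    ⟨hqW, by simp only [mem_ofPred_eq]; rw [detV_swap]; linarith⟩
  exact h.one_side hσ (hWU hxW) hxA hW hWU hxW haW (h.starPart_subset_core hxA haA) hxa' hbW
    (h.starPart_subset_core hxA hbA) hb

/-- All points of the crosscut through a cliff are cliffs of the same sign. -/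
lemma Dom.cliff_crosscut (h : Dom U C) {σ : ℝ} {q w : ℝ × ℝ}
    (hc : cliff U σ q) (hw : w ∈ crosscut U q) : cliff U σ w := by
  refine ⟨crosscut_subset hw, fun hA => disjoint_starPart_crosscut hc.2.1 hA hw, ?_⟩
  obtain ⟨t, ht, rfl, hs⟩ := hw
  have hev : ∀ᶠ a in nhds q, ∀ s ∈ uIcc 1 t, s • a ∈ U := by
    refine isCompact_uIcc.eventually_forall_of_forall_eventually
      (P := fun (y : ℝ × ℝ) (t : ℝ) => t • y ∈ U) ?_
    intro s hs'
    have hcont : Continuous (fun z : (ℝ × ℝ) × ℝ => z.2 • z.1) := by fun_prop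
    exact hcont.continuousAt.eventually_mem (h.isOpen.mem_nhds (hs s hs'))
  have hfr := (mem_closure_iff_frequently.1 hc.2.2).and_eventually hev
  rw [mem_closure_iff_frequently]
  have hcont : Continuous (fun z : ℝ × ℝ => t • z) := by fun_prop
  refine (hcont.tendsto q).frequently (hfr.mono ?_)
  rintro a ⟨⟨haA, ha⟩, hev⟩
  refine ⟨fun s hs => ?_, ?_⟩
  · rw [smul_smul]
    by_cases h1 : s * t ≤ 1
    · exact haA _ ⟨mul_nonneg hs.1 ht.le, h1⟩
    · exact hev _ (by rw [mem_uIcc]; left; exact ⟨by linarith, by nlinarith [hs.2]⟩)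
  · simp only [mem_ofPred_eq] at ha ⊢
    rw [detV_smul_smul]
    have : σ * (t * t * detV q a) = t * t * (σ * detV q a) := by ring
    rw [this]; positivity

/-- Hidden points of `core U q` do not accumulate at the crosscut of a cliff `q`, nor at any other
point of `U` outside the core: the core meets a neighbourhood of the crosscut only on the side `σ`,
where everything is visible. -/
lemma Dom.cliff_notMem_closure (h : Dom U C) {σ : ℝ} (hσ : σ = 1 ∨ σ = -1) {q y : ℝ × ℝ}
    (hc : cliff U σ q) (hy : y ∈ U) (hyN : y ∉ core U q) :
    y ∉ closure (core U q \ starPart U) := by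
  intro hcl
  have hyV := h.mem_crosscut_of_closure hc.1 hc.2.1 hy (closure_mono sdiff_subset hcl) hyN
  have hcy := h.cliff_crosscut hc hyV
  rw [← core_eq hyV] at hcl
  obtain ⟨W, hWo, hW, hWU, hyW⟩ := h.exists_ball hy
  obtain ⟨x, ⟨hxN, hxA⟩, hx, hxW⟩ := ((mem_closure_iff_frequently.1 hcl).and_eventually
    ((h.cliff_eventually hσ hcy).and (hWo.mem_nhds hyW))).exists
  have h1 := h.cliff_side hσ hcy hWo hW hWU hyW hxW hxN
  rcases h1.lt_or_eq with h2 | h2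
  · exact hxA (hx h2)
  · have : detV y x = 0 := by rcases hσ with rfl | rfl <;> linarith
    exact (core_subset hxN).2 (h.mem_crosscut_of_detV_eq_zero hcy.2.1 hW hWU hyW hxW this)

/-- A connected set of hidden points through a cliff `q` is separated from the origin by the
crosscut through `q`. -/
lemma Dom.disjoint_core (h : Dom U C) {σ : ℝ} (hσ : σ = 1 ∨ σ = -1) {q : ℝ × ℝ}
    (hc : cliff U σ q) {Y : Set (ℝ × ℝ)} (hY : IsPreconnected Y) (hYZ : Y ⊆ U \ starPart U)
    (hqY : q ∈ Y) : ∀ y ∈ Y, y ∉ core U q := by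
  intro y hyY hyN
  have hq : q ∉ core U q := fun hn => (core_subset hn).2 (mem_crosscut_self hc.1)
  obtain ⟨x, hxY, hxN, hx⟩ := hY (core U q) (closure (core U q \ starPart U))ᶜ
    (h.isOpen_core hc.1 hc.2.1) isClosed_closure.isOpen_compl (fun z hz => by
      by_cases hzN : z ∈ core U q
      · exact .inl hzN
      · exact .inr (h.cliff_notMem_closure hσ hc (hYZ hz).1 hzN)) ⟨y, hyY, hyN⟩
      ⟨q, hqY, h.cliff_notMem_closure hσ hc hc.1 hq⟩
  exact hx (subset_closure (mem_sdiff_of_mem hxN (hYZ hxY).2))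

/-- Every component of the hidden part of `U` touches the closure of the visible part, since `U` is
connected. -/
lemma Dom.exists_mem_closure (h : Dom U C) {z : ℝ × ℝ} (hz : z ∈ U \ starPart U) :
    ∃ q ∈ connectedComponentIn (U \ starPart U) z, q ∈ closure (starPart U) := by
  by_contra! hcon
  set D := connectedComponentIn (U \ starPart U) z with hD
  have hDZ : D ⊆ U \ starPart U := connectedComponentIn_subset _ _
  have hDpre : IsPreconnected D := isPreconnected_connectedComponentIn
  have hzD : z ∈ D := mem_connectedComponentIn hz
  have hDo : IsOpen D := by
    rw [Metric.isOpen_iff]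
    intro x hx
    obtain ⟨r, hr, hb⟩ := Metric.isOpen_iff.1 (h.isOpen.sdiff isClosed_closure) x
      ⟨(hDZ hx).1, hcon x hx⟩
    refine ⟨r, hr, ?_⟩
    rw [hD, connectedComponentIn_eq hx]
    exact (convex_ball x r).isPreconnected.subset_connectedComponentIn (Metric.mem_ball_self hr)
      fun y hy => ⟨(hb hy).1, fun hA => (hb hy).2 (subset_closure hA)⟩
  have hUD := h.preconn.subset_of_closure_inter_subset hDo ⟨z, hz.1, hzD⟩ (by
    rintro x ⟨hx, hxU⟩
    have hxA : x ∉ starPart U := fun hA => by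
      obtain ⟨y, hyA, hyD⟩ := mem_closure_iff.1 hx _ h.isOpen_starPart hA
      exact (hDZ hyD).2 hyA
    have : IsPreconnected (insert x D) := hDpre.subset_closure (subset_insert _ _)
      (insert_subset hx subset_closure)
    exact this.subset_connectedComponentIn (mem_insert_of_mem _ hzD)
      (insert_subset (mem_sdiff_of_mem hxU hxA) hDZ) (mem_insert _ _))
  exact (hDZ (hUD h.zero)).2 h.zero_mem_starPart

end Cliffs

/-! ### Twist homeomorphisms -/

section Dynamics

/-- An area preserving homeomorphism `F` of the plane which leaves `U` invariant, fixes `K`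
pointwise and twists rays from the origin in the direction `ε = ±1`, while its inverse twists them
in the opposite direction. -/
structure TwistDom (U C K : Set (ℝ × ℝ)) (F : (ℝ × ℝ) ≃ₜ (ℝ × ℝ)) (ε : ℝ) : Prop where
  dom : Dom U C
  sgn : ε = 1 ∨ ε = -1
  closed : IsClosed K
  conv : Convex ℝ K
  zero : (0 : ℝ × ℝ) ∈ K
  sub : K ⊆ U
  maps : ∀ x, F x ∈ U ↔ x ∈ U
  fix : ∀ x ∈ K, F x = x
  twist : ∀ p ∉ K, ∀ c > (1 : ℝ), 0 < ε * detV (F p) (F (c • p))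
  twist_symm : ∀ p ∉ K, ∀ c > (1 : ℝ), 0 < -ε * detV (F.symm p) (F.symm (c • p))
  vol : ∀ X, IsOpen X → Disjoint X K → volume (F '' X) = volume X
  vol_symm : ∀ X, IsOpen X → Disjoint X K → volume (F.symm '' X) = volume X

variable {U C K : Set (ℝ × ℝ)} {F : (ℝ × ℝ) ≃ₜ (ℝ × ℝ)} {ε : ℝ}

namespace TwistDom

lemma symm (h : TwistDom U C K F ε) : TwistDom U C K F.symm (-ε) where
  dom := h.dom
  sgn := by rcases h.sgn with rfl | rfl <;> simp
  closed := h.closed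
  conv := h.conv
  zero := h.zero
  sub := h.sub
  maps := fun x => by rw [← h.maps, F.apply_symm_apply]
  fix := fun x hx => by rw [F.symm_apply_eq, h.fix x hx]
  twist := h.twist_symm
  twist_symm := by simpa using h.twist
  vol := h.vol_symm
  vol_symm := by simpa using h.vol

lemma subset_starPart (h : TwistDom U C K F ε) : K ⊆ starPart U := fun _ hx _ ht =>
  h.sub (h.conv.smul_mem_of_zero_mem h.zero hx ht)

lemma map_zero (h : TwistDom U C K F ε) : F 0 = 0 := h.fix 0 h.zero

/-- A ray is turned towards the side `ε`, so its image cannot enter a cliff whose visible side is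
`ε`: the first arrival at the crosscut would come from the opposite side. -/
lemma map_mem_core (h : TwistDom U C K F ε) {q : ℝ × ℝ} (hc : cliff U ε q) {p : ℝ × ℝ}
    (hp : p ∈ starPart U) : F p ∈ core U q := by
  have hcont : Continuous fun s : ℝ => F (s • p) := by fun_prop
  have hU : ∀ s ∈ Icc (0 : ℝ) 1, F (s • p) ∈ U := fun s hs => (h.maps _).2 (hp s hs)
  have h0 : F ((0 : ℝ) • p) ∈ core U q := by
    rw [zero_smul, h.map_zero]
    exact h.dom.starPart_subset_core hc.2.1 h.dom.zero_mem_starPart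
  obtain ⟨α, β, -, -, -, -, -, e⟩ := h.dom.exists_ends hc.1 hc.2.1
  have hcl : IsClosed {s : ℝ | F (s • p) ∈ segment ℝ (α • q) (β • q)} := by
    refine IsClosed.preimage hcont ?_
    rw [segment_eq_image]
    exact (isCompact_Icc.image (by fun_prop)).isClosed
  have hmem : ∀ s ∈ Icc (0 : ℝ) 1, F (s • p) ∈ crosscut U q ↔
      F (s • p) ∈ segment ℝ (α • q) (β • q) := fun s hs => by
    rw [e]; exact ⟨fun h => h.2, fun h => ⟨hU s hs, h⟩⟩
  by_cases hne : (Icc (0 : ℝ) 1 ∩ {s | F (s • p) ∈ segment ℝ (α • q) (β • q)}).Nonempty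
  · exfalso
    -- `s₀` is the first arrival of the image of the radial segment at the crosscut
    obtain ⟨s₀, ⟨hs₀, hseg⟩, hmin⟩ := (isCompact_Icc.inter_right hcl).exists_isLeast hne
    have hw : F (s₀ • p) ∈ crosscut U q := (hmem _ hs₀).2 hseg
    have hs₀pos : 0 < s₀ := by
      refine lt_of_le_of_ne hs₀.1 ?_
      rintro rfl
      exact (core_subset h0).2 hw
    have hN : (fun s : ℝ => F (s • p)) '' Ico 0 s₀ ⊆ core U q := by
      refine subset_core (isPreconnected_Ico.image _ hcont.continuousOn) ?_ ?_
        ⟨_, ⟨0, ⟨le_rfl, hs₀pos⟩, rfl⟩, h0⟩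
      · rintro _ ⟨s, hs, rfl⟩
        exact hU s ⟨hs.1, hs.2.le.trans hs₀.2⟩
      · rintro _ ⟨s, hs, rfl⟩ hV
        have hs1 : s ∈ Icc (0 : ℝ) 1 := ⟨hs.1, hs.2.le.trans hs₀.2⟩
        exact absurd (hmin ⟨hs1, (hmem s hs1).1 hV⟩) (not_le.2 hs.2)
    have hK : s₀ • p ∉ K := fun hK => by
      rw [h.fix _ hK] at hw
      exact disjoint_starPart_crosscut hc.2.1 (h.subset_starPart hK) hw
    have hcw := h.dom.cliff_crosscut hc hw
    obtain ⟨W, hWo, hW, hWU, hwW⟩ := h.dom.exists_ball hcw.1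
    have hev : ∀ᶠ s in nhdsWithin s₀ (Iio s₀), s • p ∉ K ∧ F (s • p) ∈ W ∧ 0 < s ∧ s < s₀ := by
      have h1 : ∀ᶠ s in nhds s₀, s • p ∈ Kᶜ :=
        (show Continuous fun s : ℝ => s • p by fun_prop).continuousAt.eventually_mem
          (h.closed.isOpen_compl.mem_nhds hK)
      have h2 : ∀ᶠ s in nhds s₀, F (s • p) ∈ W :=
        hcont.continuousAt.eventually_mem (hWo.mem_nhds hwW)
      filter_upwards [nhdsWithin_le_nhds h1, nhdsWithin_le_nhds h2,
        nhdsWithin_le_nhds (lt_mem_nhds hs₀pos), self_mem_nhdsWithin] with s a b c d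
      exact ⟨a, b, c, d⟩
    obtain ⟨s, hsK, hsW, hs0, hs1⟩ := hev.exists
    have htw := h.twist _ hsK (s₀ / s) ((one_lt_div hs0).2 hs1)
    rw [smul_smul, div_mul_cancel₀ _ hs0.ne', detV_swap] at htw
    have := h.dom.cliff_side h.sgn hcw hWo hW hWU hwW hsW
      ((core_eq hw).symm ▸ hN ⟨s, ⟨hs0.le, hs1⟩, rfl⟩)
    linarith
  · have := subset_core (q := q)
      ((isPreconnected_Icc (a := (0 : ℝ)) (b := 1)).image _ hcont.continuousOn) (by
        rintro _ ⟨s, hs, rfl⟩; exact hU s hs) (by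
        rintro _ ⟨s, hs, rfl⟩ hV
        exact hne ⟨s, hs, (hmem s hs).1 hV⟩) ⟨_, ⟨0, by simp, rfl⟩, h0⟩
    simpa using this ⟨1, by simp, rfl⟩

/-- The preimage of a cliff in the twist direction lies off the closure of the visible part: the
twist would make the preimage of the crosscut visible. -/
lemma symm_notMem_closure (h : TwistDom U C K F ε) {q : ℝ × ℝ} (hc : cliff U ε q) :
    F.symm q ∈ U ∧ F.symm q ∉ closure (starPart U) := by
  have hU : F.symm q ∈ U := (h.symm.maps q).2 hc.1
  have hV : ∀ w ∈ crosscut U q, F.symm w ∉ starPart U := fun w hw hA => by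
    have := h.map_mem_core hc hA
    rw [F.apply_symm_apply] at this
    exact (core_subset this).2 hw
  have hqK : q ∉ K := fun hK => hc.2.1 (h.subset_starPart hK)
  obtain ⟨W, hWo, hW, hWU, hqW⟩ := h.dom.exists_ball hc.1
  have hc1 : Continuous fun t : ℝ => t • q := by fun_prop
  have hc2 : Continuous fun t : ℝ => F.symm (t • q) := by fun_prop
  have key : ∀ t : ℝ, t • q ∈ W → F.symm (t • q) ∉ starPart U := fun t ht =>
    hV _ (h.dom.mem_crosscut_of_detV_eq_zero hc.2.1 hW hWU hqW ht (by
      simp only [detV, Prod.smul_fst, Prod.smul_snd, smul_eq_mul]; ring))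
  have e1 : ∀ᶠ t in nhds (1 : ℝ), t • q ∈ W :=
    hc1.continuousAt.eventually_mem (by simpa using hWo.mem_nhds hqW)
  have e2 : ∀ᶠ t in nhds (1 : ℝ), t • q ∈ Kᶜ :=
    hc1.continuousAt.eventually_mem (by simpa using h.closed.isOpen_compl.mem_nhds hqK)
  refine ⟨hU, fun hcl => ?_⟩
  have hA := hV q (mem_crosscut_self hc.1)
  have hor : cliff U ε (F.symm q) ∨ cliff U (-ε) (F.symm q) := by
    have := h.dom.cliff_or hU hA hcl
    rcases h.sgn with rfl | rfl
    · exact this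
    · simpa using this.symm
  -- `F⁻¹` turns the points of the crosscut just below `q` towards the side `ε` of `F⁻¹ q`, and those
  -- just above `q` towards the side `-ε`; the visible side of the cliff decides which to use
  rcases hor with hp | hp
  · have e3 := (hc2.tendsto 1).eventually (by
      simpa using h.dom.cliff_eventually h.sgn hp)
    obtain ⟨t, ⟨t1, t2, t3⟩, t4, t5⟩ := (((e1.and (e2.and e3)).filter_mono
      (nhdsWithin_le_nhds (s := Iio 1))).and (((lt_mem_nhds one_pos).filter_mono
      (nhdsWithin_le_nhds (s := Iio 1))).and self_mem_nhdsWithin)).exists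
    refine key t t1 (t3 ?_)
    have := h.twist_symm _ t2 t⁻¹ ((one_lt_inv₀ t4).2 t5)
    rw [smul_smul, inv_mul_cancel₀ t4.ne', one_smul, detV_swap] at this
    linarith
  · have e3 := (hc2.tendsto 1).eventually (by
      simpa using h.dom.cliff_eventually h.symm.sgn hp)
    obtain ⟨t, ⟨t1, t3⟩, t5⟩ := (((e1.and e3).filter_mono
      (nhdsWithin_le_nhds (s := Ioi 1))).and self_mem_nhdsWithin).exists
    refine key t t1 (t3 ?_)
    have := h.twist_symm _ hqK t t5
    linarith

/-- The union of the components of the hidden part of `U` that carry a cliff of sign `ε`. -/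
def cliffPart (U : Set (ℝ × ℝ)) (ε : ℝ) : Set (ℝ × ℝ) :=
  {z | ∃ q, cliff U ε q ∧ z ∈ connectedComponentIn (U \ starPart U) q}

lemma cliffPart_subset : cliffPart U ε ⊆ U \ starPart U := by
  rintro z ⟨q, -, hz⟩
  exact connectedComponentIn_subset _ _ hz

lemma cliff_mem_cliffPart {q : ℝ × ℝ} (hc : cliff U ε q) : q ∈ cliffPart U ε :=
  ⟨q, hc, mem_connectedComponentIn ⟨hc.1, hc.2.1⟩⟩

/-- The inverse map sends hidden components carrying a cliff of sign `ε` into hidden components of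
the same kind. The image `F⁻¹ Y` of such a component `Y` is hidden by `map_mem_core`; a cliff of
sign `-ε` on the component containing it would, by `map_mem_core` for `F⁻¹`, put `F⁻¹ q` in the
closure of the visible part, contrary to `symm_notMem_closure`. -/
lemma symm_mem_cliffPart (h : TwistDom U C K F ε) {z : ℝ × ℝ} (hz : z ∈ cliffPart U ε) :
    F.symm z ∈ cliffPart U ε := by
  obtain ⟨q, hc, hz⟩ := hz
  obtain ⟨hpU, hpcl⟩ := h.symm_notMem_closure hc
  have hqZ : q ∈ U \ starPart U := ⟨hc.1, hc.2.1⟩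
  set Y := connectedComponentIn (U \ starPart U) q with hY
  have hqY : q ∈ Y := mem_connectedComponentIn hqZ
  have hdis := h.dom.disjoint_core h.sgn hc isPreconnected_connectedComponentIn
    (connectedComponentIn_subset _ _) hqY
  have hGY : F.symm '' Y ⊆ connectedComponentIn (U \ starPart U) (F.symm q) := by
    refine (isPreconnected_connectedComponentIn.image _
      F.symm.continuous.continuousOn).subset_connectedComponentIn ⟨q, hqY, rfl⟩ ?_
    rintro _ ⟨y, hy, rfl⟩
    refine ⟨(h.symm.maps y).2 (connectedComponentIn_subset _ _ hy).1, fun hA => ?_⟩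
    have := h.map_mem_core hc hA
    rw [F.apply_symm_apply] at this
    exact hdis y hy this
  have hpZ : F.symm q ∈ U \ starPart U :=
    connectedComponentIn_subset _ _ (hGY ⟨q, hqY, rfl⟩)
  obtain ⟨q', hq', hq'cl⟩ := h.dom.exists_mem_closure hpZ
  have hq'Z := connectedComponentIn_subset _ _ hq'
  have hor : cliff U ε q' ∨ cliff U (-ε) q' := by
    have := h.dom.cliff_or hq'Z.1 hq'Z.2 hq'cl
    rcases h.sgn with rfl | rfl
    · exact this
    · simpa using this.symm
  rcases hor with hc' | hc'
  · exact ⟨q', hc', connectedComponentIn_eq hq' ▸ hGY ⟨z, hz, rfl⟩⟩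
  · exfalso
    have hp : F.symm q ∉ core U q' := h.dom.disjoint_core h.symm.sgn hc'
      isPreconnected_connectedComponentIn (connectedComponentIn_subset _ _) hq' _
      (mem_connectedComponentIn hpZ)
    have hqcl : q ∈ closure (starPart U) := closure_mono inter_subset_left hc.2.2
    have hpc : F.symm q ∈ closure (core U q') := by
      refine closure_mono ?_ (image_closure_subset_closure_image F.symm.continuous
        ⟨q, hqcl, rfl⟩)
      rintro _ ⟨a, ha, rfl⟩
      exact h.symm.map_mem_core hc' ha
    have hV := h.dom.mem_crosscut_of_closure hc'.1 hc'.2.1 hpU hpc hp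
    exact hpcl (closure_mono inter_subset_left (h.dom.cliff_crosscut hc' hV).2.2)

/-- A cliff would produce a wandering open set of positive area inside the bounded domain `U`. -/
lemma not_cliff (h : TwistDom U C K F ε) (q : ℝ × ℝ) : ¬ cliff U ε q := by
  intro hc
  obtain ⟨hpU, hpcl⟩ := h.symm_notMem_closure hc
  have hpP := h.symm_mem_cliffPart (cliff_mem_cliffPart hc)
  obtain ⟨r, hr, hB⟩ := Metric.isOpen_iff.1 (h.dom.isOpen.sdiff isClosed_closure) _
    (mem_sdiff_of_mem hpU hpcl)
  have hBP : Metric.ball (F.symm q) r ⊆ cliffPart U ε := by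
    obtain ⟨q₁, hc₁, hp₁⟩ := hpP
    intro x hx
    refine ⟨q₁, hc₁, ?_⟩
    rw [connectedComponentIn_eq hp₁]
    exact (convex_ball _ r).isPreconnected.subset_connectedComponentIn (Metric.mem_ball_self hr)
      (fun y hy => mem_sdiff_of_mem (hB hy).1 fun hA => (hB hy).2 (subset_closure hA)) hx
  -- `O` lies in `cliffPart U ε` but off its image under `F⁻¹`, hence is wandering for `F⁻¹`
  set O := Metric.ball (F.symm q) r ∩ F.symm '' starPart U with hO
  have hOo : IsOpen O := Metric.isOpen_ball.inter (F.symm.isOpenMap _ h.dom.isOpen_starPart)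
  have hOne : O.Nonempty := by
    have hqcl : q ∈ closure (starPart U) := closure_mono inter_subset_left hc.2.2
    exact mem_closure_iff.1 (image_closure_subset_closure_image F.symm.continuous
        ⟨q, hqcl, rfl⟩) _ Metric.isOpen_ball (Metric.mem_ball_self hr)
  have hOdis : ∀ x ∈ O, ∀ z ∈ cliffPart U ε, x ≠ F.symm z := by
    rintro x ⟨-, a, ha, rfl⟩ z hz hxz
    rw [F.symm.injective hxz] at ha
    exact (cliffPart_subset hz).2 ha
  have hit : ∀ n : ℕ, ∀ x ∈ cliffPart U ε, (F.symm^[n]) x ∈ cliffPart U ε := by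
    intro n
    induction n with
    | zero => exact fun x hx => hx
    | succ n ih =>
      intro x hx
      rw [Function.iterate_succ_apply']
      exact h.symm_mem_cliffPart (ih x hx)
  have hopen : ∀ n : ℕ, IsOpen ((F.symm^[n]) '' O) := by
    intro n
    induction n with
    | zero => simpa using hOo
    | succ n ih =>
      rw [Function.iterate_succ', image_comp]
      exact F.symm.isOpenMap _ ih
  have hvol : ∀ n : ℕ, volume ((F.symm^[n]) '' O) = volume O := by
    intro n
    induction n with
    | zero => simp
    | succ n ih =>
      rw [Function.iterate_succ', image_comp, h.vol_symm _ (hopen n), ih]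
      rw [Set.disjoint_left]
      rintro _ ⟨x, hx, rfl⟩ hK
      exact (cliffPart_subset (hit n x (hBP hx.1))).2 (h.subset_starPart hK)
  have hlt : ∀ m n : ℕ, m < n → Disjoint ((F.symm^[m]) '' O) ((F.symm^[n]) '' O) := by
    intro m n hmn
    rw [Set.disjoint_left]
    rintro _ ⟨x, hx, rfl⟩ ⟨y, hy, hxy⟩
    obtain ⟨k, rfl⟩ := Nat.exists_eq_add_of_lt hmn
    rw [add_assoc, Function.iterate_add_apply] at hxy
    have := F.symm.injective.iterate m hxy
    rw [Function.iterate_succ_apply'] at this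
    exact hOdis x hx _ (hit k y (hBP hy.1)) this.symm
  have hdis : Pairwise (Function.onFun Disjoint fun n : ℕ => (F.symm^[n]) '' O) := fun m n hmn =>
    hmn.lt_or_gt.elim (hlt m n) fun hnm => (hlt n m hnm).symm
  have hsum := measure_iUnion (μ := (volume : Measure (ℝ × ℝ))) hdis
    (fun n => (hopen n).measurableSet)
  simp only [hvol] at hsum
  rw [ENNReal.tsum_const_eq_top_of_ne_zero (hOo.measure_pos _ hOne).ne'] at hsum
  refine (lt_of_le_of_lt (measure_mono ?_) h.dom.bdd.measure_lt_top).ne hsum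
  refine iUnion_subset fun n => ?_
  rintro _ ⟨x, hx, rfl⟩
  exact (cliffPart_subset (hit n x (hBP hx.1))).1

/-- An invariant domain of a twist map is star-shaped. -/
theorem subset_starPart_self (h : TwistDom U C K F ε) : U ⊆ starPart U := by
  intro z hz
  by_contra hzA
  obtain ⟨q, hq, hcl⟩ := h.dom.exists_mem_closure ⟨hz, hzA⟩
  have hqZ := connectedComponentIn_subset _ _ hq
  have hor := h.dom.cliff_or hqZ.1 hqZ.2 hcl
  rcases h.sgn with rfl | rfl
  · exact hor.elim (h.not_cliff q) (h.symm.not_cliff q)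
  · refine hor.elim (fun h1 => h.symm.not_cliff q ?_) (h.not_cliff q)
    simpa using h1

end TwistDom

end Dynamics

/-! ### The outer billiard map of a convex body -/

section Tangent

/-- `m` is a point of contact with `K` of an oriented line from `A`, having `K` on its left for
`ε = 1` and on its right for `ε = -1`. A point `A ∈ K` counts as its own point of contact. -/
def Tan (K : Set (ℝ × ℝ)) (ε : ℝ) (A m : ℝ × ℝ) : Prop :=
  m ∈ K ∧ ∀ k ∈ K, 0 ≤ ε * detV (m - A) (k - A)

/-- A compact convex neighbourhood of the origin without boundary segments, the last property
being expressed by saying that a chord lying in a supporting line is a point. -/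
structure Body (K : Set (ℝ × ℝ)) : Prop where
  compact : IsCompact K
  conv : Convex ℝ K
  zero : (0 : ℝ × ℝ) ∈ interior K
  strict : ∀ x ∈ K, ∀ y ∈ K, ∀ σ : ℝ, σ ≠ 0 → (∀ k ∈ K, 0 ≤ σ * detV (y - x) (k - x)) → x = y

lemma eq_smul_of_detV_eq_zero {u v : ℝ × ℝ} (hu : u ≠ 0) (h : detV u v = 0) :
    ∃ t : ℝ, v = t • u := by
  have hpos : 0 < u.1 ^ 2 + u.2 ^ 2 := by
    by_contra hcon
    apply hu
    have h1 : u.1 = 0 := by nlinarith [sq_nonneg u.1, sq_nonneg u.2]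
    have h2 : u.2 = 0 := by nlinarith [sq_nonneg u.1, sq_nonneg u.2]
    exact Prod.ext h1 h2
  refine ⟨(v.1 * u.1 + v.2 * u.2) / (u.1 ^ 2 + u.2 ^ 2), ?_⟩
  simp only [detV] at h
  ext <;> simp only [Prod.smul_fst, Prod.smul_snd, smul_eq_mul] <;> field_simp
  · linear_combination -u.2 * h
  · linear_combination u.1 * h

lemma smul_mem_of_between {K : Set (ℝ × ℝ)} (hK : Convex ℝ K) {A d : ℝ × ℝ} {a b c : ℝ}
    (ha : A + a • d ∈ K) (hc : A + c • d ∈ K) (hab : a ≤ b) (hbc : b ≤ c) : A + b • d ∈ K := by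
  have hb : b ∈ segment ℝ a c := by rw [segment_eq_Icc (hab.trans hbc)]; exact ⟨hab, hbc⟩
  obtain ⟨s, t, hs, ht, hst, rfl⟩ := hb
  have := hK ha hc hs ht hst
  convert this using 1
  rw [smul_add, smul_add, smul_smul, smul_smul, add_smul]
  have : A = s • A + t • A := by rw [← add_smul, hst, one_smul]
  nth_rewrite 1 [this]
  simp only [smul_eq_mul]
  abel

/-- The existence of an outer billiard map rules out boundary segments: from a point on the
extension of such a segment the tangency would not be at a single point. -/
lemma IsOuterBilliard.strict_aux {K : Set (ℝ × ℝ)} {T : ℝ × ℝ → ℝ × ℝ} (hT : IsOuterBilliard K T)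
    (hcomp : IsCompact K) (hconv : Convex ℝ K) {x y : ℝ × ℝ} (hx : x ∈ K) (hy : y ∈ K)
    (hd : ∀ k ∈ K, 0 ≤ detV (y - x) (k - x)) : x = y := by
  by_contra hxy
  obtain ⟨d, hdef⟩ : ∃ d, d = y - x := ⟨_, rfl⟩
  have hd0 : d ≠ 0 := by rw [hdef]; exact sub_ne_zero.2 (Ne.symm hxy)
  obtain ⟨s, hs, hA⟩ : ∃ s > (0 : ℝ), x - s • d ∉ K := by
    obtain ⟨R, hR⟩ := hcomp.isBounded.exists_norm_le
    have hdn := norm_pos_iff.2 hd0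
    refine ⟨(‖x‖ + |R| + 1) / ‖d‖, by positivity, fun hmem => ?_⟩
    have h1 := hR _ hmem
    have h2 := norm_sub_norm_le (((‖x‖ + |R| + 1) / ‖d‖) • d) x
    rw [norm_sub_rev, norm_smul, norm_div, norm_norm, div_mul_cancel₀ _ hdn.ne',
      Real.norm_of_nonneg (by positivity)] at h2
    have := le_abs_self R
    linarith
  obtain ⟨A, hAdef⟩ : ∃ A, A = x - s • d := ⟨_, rfl⟩
  rw [← hAdef] at hA
  have hxA : x = A + s • d := by rw [hAdef]; abel
  have hyA : y = A + (s + 1) • d := by rw [hAdef, add_smul, one_smul, hdef]; abel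
  obtain ⟨-, hMf, hseg, hdet⟩ := hT A hA
  obtain ⟨M, hM⟩ : ∃ M, M = (1 / 2 : ℝ) • (A + T A) := ⟨_, rfl⟩
  rw [← hM] at hMf hseg hdet
  have hMK : M ∈ K := hcomp.isClosed.frontier_subset hMf
  have hTA : T A = (2 : ℝ) • M - A := by rw [hM]; module
  have hdM : detV d (M - A) = 0 := by
    apply le_antisymm
    · have := hdet x hx
      rw [hTA, hxA] at this
      have h2 : detV ((2 : ℝ) • M - A - A) (A + s • d - M) = -(2 * s) * detV d (M - A) := by
        simp only [detV, Prod.smul_fst, Prod.smul_snd, Prod.fst_add, Prod.snd_add, Prod.fst_sub,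
          Prod.snd_sub, smul_eq_mul]; ring
      rw [h2] at this
      nlinarith
    · have := hd M hMK
      rw [← hdef, hxA] at this
      have h2 : detV d (M - (A + s • d)) = detV d (M - A) := by
        simp only [detV, Prod.smul_fst, Prod.smul_snd, Prod.fst_add, Prod.snd_add, Prod.fst_sub,
          Prod.snd_sub, smul_eq_mul]; ring
      rwa [h2] at this
  obtain ⟨l, hl⟩ := eq_smul_of_detV_eq_zero hd0 hdM
  have hMl : M = A + l • d := by rw [← hl]; abel
  have hlpos : 0 < l := by
    by_contra! hl0
    apply hA
    have := smul_mem_of_between hconv (hMl ▸ hMK) (hxA ▸ hx) hl0 hs.le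
    simpa using this
  have hone : ∀ b ∈ Icc 0 (2 * l), A + b • d ∈ K → b = l := by
    intro b hb hbK
    have hbs : A + b • d ∈ segment ℝ A (T A) := by
      rw [segment_eq_image']
      refine ⟨b / (2 * l), ⟨div_nonneg hb.1 (by positivity),
        (div_le_one (by positivity)).2 hb.2⟩, ?_⟩
      change A + (b / (2 * l)) • (T A - A) = A + b • d
      rw [hTA, hMl]
      have : (2 : ℝ) • (A + l • d) - A - A = (2 * l) • d := by module
      rw [this, smul_smul, div_mul_cancel₀ _ (by positivity)]
    have := (hseg ▸ ⟨hbs, hbK⟩ : A + b • d ∈ ({M} : Set (ℝ × ℝ)))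
    rw [mem_singleton_iff, hMl, add_right_inj] at this
    exact smul_left_injective ℝ hd0 this
  have hmu : ∀ b : ℝ, 0 < b → A + b • d ∈ K → b = l := by
    intro b hb hbK
    rcases le_total b l with h1 | h1
    · exact hone b ⟨hb.le, by linarith⟩ hbK
    · have h2 : l ≤ min b (2 * l) := le_min h1 (by linarith)
      have := hone (min b (2 * l)) ⟨by linarith, min_le_right _ _⟩
        (smul_mem_of_between hconv (hMl ▸ hMK) hbK h2 (min_le_left _ _))
      rcases min_choice b (2 * l) with h3 | h3 <;> rw [h3] at this
      · exact this
      · linarith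
  have h1 := hmu s hs (hxA ▸ hx)
  have h2 := hmu (s + 1) (by linarith) (hyA ▸ hy)
  linarith

lemma IsOuterBilliard.body {K : Set (ℝ × ℝ)} {T : ℝ × ℝ → ℝ × ℝ} (hT : IsOuterBilliard K T)
    (hcomp : IsCompact K) (hconv : Convex ℝ K) (hzero : (0 : ℝ × ℝ) ∈ interior K) : Body K where
  compact := hcomp
  conv := hconv
  zero := hzero
  strict := by
    intro x hx y hy σ hσ h
    rcases hσ.lt_or_gt with hs | hs
    · refine (hT.strict_aux hcomp hconv hy hx fun k hk => ?_).symm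
      have h1 := h k hk
      have h2 : detV (y - x) (k - x) = -detV (x - y) (k - y) := by
        simp only [detV, Prod.fst_sub, Prod.snd_sub]; ring
      rw [h2] at h1
      nlinarith
    · refine hT.strict_aux hcomp hconv hx hy fun k hk => ?_
      exact nonneg_of_mul_nonneg_right (h k hk) hs

variable {K : Set (ℝ × ℝ)} {ε : ℝ}

namespace Body

lemma zero_mem (h : Body K) : (0 : ℝ × ℝ) ∈ K := interior_subset h.zero

lemma tan_unique (h : Body K) (hε : ε ≠ 0) {A m m' : ℝ × ℝ} (hm : Tan K ε A m)
    (hm' : Tan K ε A m') : m = m' := by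
  by_cases hA : m = A
  · subst hA
    exact h.strict m hm.1 m' hm'.1 ε hε hm'.2
  have h1 := hm.2 m' hm'.1
  have h2 := hm'.2 m hm.1
  rw [detV_swap] at h2
  have h3 : ε * detV (m - A) (m' - A) = 0 := by linarith
  obtain ⟨l, hl⟩ := eq_smul_of_detV_eq_zero (sub_ne_zero.2 hA)
    ((mul_eq_zero.1 h3).resolve_left hε)
  by_cases hl1 : l = 1
  · rw [hl1, one_smul, sub_left_inj] at hl
    exact hl.symm
  refine h.strict m hm.1 m' hm'.1 (ε * (l - 1)⁻¹) (mul_ne_zero hε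
    (inv_ne_zero (sub_ne_zero.2 hl1))) fun k hk => ?_
  have h4 : m' - m = (l - 1) • (m - A) := by
    rw [sub_smul, ← hl]; module
  have h5 : detV (m' - m) (k - m) = (l - 1) * detV (m - A) (k - A) := by
    rw [h4]
    simp only [detV, Prod.smul_fst, Prod.smul_snd, Prod.fst_sub,
          Prod.snd_sub, smul_eq_mul]; ring
  rw [h5, mul_assoc, inv_mul_cancel_left₀ (sub_ne_zero.2 hl1)]
  exact hm.2 k hk

lemma tan_self {A : ℝ × ℝ} (hA : A ∈ K) : Tan K ε A A := ⟨hA, fun k _ => by simp [detV]⟩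

lemma tan_exists (h : Body K) (ε : ℝ) (A : ℝ × ℝ) : ∃ m, Tan K ε A m := by
  by_cases hA : A ∈ K
  · exact ⟨A, tan_self hA⟩
  obtain ⟨f, u, hfu, hf⟩ := geometric_hahn_banach_point_closed h.conv h.compact.isClosed hA
  set α := f (1, 0) with hα
  set β := f (0, 1) with hβ
  have hfe : ∀ v : ℝ × ℝ, f v = α * v.1 + β * v.2 := by
    intro v
    have : v = v.1 • ((1, 0) : ℝ × ℝ) + v.2 • ((0, 1) : ℝ × ℝ) := by
      ext <;> simp
    conv_lhs => rw [this]
    rw [map_add, map_smul, map_smul, smul_eq_mul, smul_eq_mul]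
    ring
  have hpos : ∀ k ∈ K, 0 < α * (k - A).1 + β * (k - A).2 := by
    intro k hk
    rw [← hfe, map_sub]
    linarith [hf k hk]
  have hc2 : Continuous fun k : ℝ × ℝ => α * (k - A).1 + β * (k - A).2 := by fun_prop
  have hc1 : Continuous fun k : ℝ × ℝ => ε * (-β * (k - A).1 + α * (k - A).2) := by fun_prop
  obtain ⟨m, hm, hmin⟩ := h.compact.exists_isMinOn ⟨0, h.zero_mem⟩
    (hc1.continuousOn.div hc2.continuousOn fun k hk => (hpos k hk).ne')
  refine ⟨m, hm, fun k hk => ?_⟩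
  have h1 := isMinOn_iff.1 hmin k hk
  simp only [Pi.div_apply] at h1
  rw [div_le_div_iff₀ (hpos m hm) (hpos k hk)] at h1
  have hab : 0 < α ^ 2 + β ^ 2 := by
    have := hpos 0 h.zero_mem
    by_contra hcon
    have h1 : α = 0 := by nlinarith [sq_nonneg α, sq_nonneg β]
    have h2 : β = 0 := by nlinarith [sq_nonneg α, sq_nonneg β]
    rw [h1, h2] at this
    linarith
  refine nonneg_of_mul_nonneg_right ?_ hab
  simp only [detV]
  linarith

end Body

/-- The contact point of the tangent line from `A` having `K` on the side `ε`; for a body it exists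
and is unique by `tan_exists` and `tan_unique`, and it is `A` itself when `A ∈ K`. -/
def tanPt (K : Set (ℝ × ℝ)) (ε : ℝ) (A : ℝ × ℝ) : ℝ × ℝ := Classical.epsilon (Tan K ε A)

/-- Reflection in the contact point, defined on the whole plane; outside `K` it is the outer
billiard map for `ε = 1` and its inverse for `ε = -1`, while points of `K` are fixed. -/
def bill (K : Set (ℝ × ℝ)) (ε : ℝ) (A : ℝ × ℝ) : ℝ × ℝ := (2 : ℝ) • tanPt K ε A - A

namespace Body

lemma tan_tanPt (h : Body K) (ε : ℝ) (A : ℝ × ℝ) : Tan K ε A (tanPt K ε A) :=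
  Classical.epsilon_spec (h.tan_exists ε A)

lemma tanPt_eq (h : Body K) (hε : ε ≠ 0) {A m : ℝ × ℝ} (hm : Tan K ε A m) : tanPt K ε A = m :=
  h.tan_unique hε (h.tan_tanPt ε A) hm

lemma continuous_tanPt (h : Body K) (hε : ε ≠ 0) : Continuous (tanPt K ε) := by
  rw [continuous_iff_ultrafilter]
  intro x g hg
  have hle : ((g.map (tanPt K ε) : Ultrafilter (ℝ × ℝ)) : Filter (ℝ × ℝ)) ≤ Filter.principal K := by
    rw [Filter.le_principal_iff, Ultrafilter.coe_map, Filter.mem_map]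
    exact Filter.univ_mem' fun A => (h.tan_tanPt ε A).1
  obtain ⟨y, hy, hgy⟩ := h.compact.ultrafilter_le_nhds _ hle
  have hgy' : Filter.Tendsto (tanPt K ε) g (nhds y) := hgy
  have : Tan K ε x y := by
    refine ⟨hy, fun k hk => ?_⟩
    have hc : Continuous fun z : (ℝ × ℝ) × (ℝ × ℝ) => ε * detV (z.1 - z.2) (k - z.2) := by
      unfold detV; fun_prop
    exact ge_of_tendsto' ((hc.tendsto (y, x)).comp (hgy'.prodMk_nhds hg)) fun A =>
      (h.tan_tanPt ε A).2 k hk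
  rwa [h.tanPt_eq hε this]

lemma continuous_bill (h : Body K) (hε : ε ≠ 0) : Continuous (bill K ε) := by
  unfold bill
  have := h.continuous_tanPt hε
  fun_prop

lemma bill_of_mem (h : Body K) (hε : ε ≠ 0) {A : ℝ × ℝ} (hA : A ∈ K) : bill K ε A = A := by
  rw [bill, h.tanPt_eq hε (tan_self hA)]
  module

lemma bill_neg_bill (h : Body K) (hε : ε ≠ 0) (A : ℝ × ℝ) : bill K (-ε) (bill K ε A) = A := by
  have hm := h.tan_tanPt ε A
  have : Tan K (-ε) (bill K ε A) (tanPt K ε A) := by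
    refine ⟨hm.1, fun k hk => ?_⟩
    have := hm.2 k hk
    unfold bill
    convert this using 1
    simp only [detV, Prod.smul_fst, Prod.smul_snd, Prod.fst_sub, Prod.snd_sub, smul_eq_mul]
    ring
  rw [bill, h.tanPt_eq (neg_ne_zero.2 hε) this, bill]
  abel

/-- The billiard reflection as a homeomorphism of the plane. -/
def homeo (h : Body K) (hε : ε ≠ 0) : (ℝ × ℝ) ≃ₜ (ℝ × ℝ) where
  toFun := bill K ε
  invFun := bill K (-ε)
  left_inv := h.bill_neg_bill hε
  right_inv := fun A => by
    have := h.bill_neg_bill (neg_ne_zero.2 hε) A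
    rwa [neg_neg] at this
  continuous_toFun := h.continuous_bill hε
  continuous_invFun := h.continuous_bill (neg_ne_zero.2 hε)

lemma bill_notMem (h : Body K) (hε : ε ≠ 0) {A : ℝ × ℝ} (hA : A ∉ K) : bill K ε A ∉ K := by
  intro hK
  have h1 := h.bill_neg_bill hε A
  rw [h.bill_of_mem (neg_ne_zero.2 hε) hK] at h1
  exact hA (h1 ▸ hK)

lemma eq_bill (h : Body K) {T : ℝ × ℝ → ℝ × ℝ} (hT : IsOuterBilliard K T) {A : ℝ × ℝ}
    (hA : A ∉ K) : T A = bill K 1 A := by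
  obtain ⟨-, hMf, -, hdet⟩ := hT A hA
  have : Tan K 1 A ((1 / 2 : ℝ) • (A + T A)) := by
    refine ⟨h.compact.isClosed.frontier_subset hMf, fun k hk => ?_⟩
    have := hdet k hk
    simp only [detV, Prod.smul_fst, Prod.smul_snd, Prod.fst_sub, Prod.snd_sub, Prod.fst_add,
      Prod.snd_add, smul_eq_mul] at this ⊢
    linarith
  rw [bill, h.tanPt_eq one_ne_zero this]
  module

/-- Since the origin is interior to `K`, the tangent line from `p` misses it and has it on the side
`ε`. -/
lemma tan_pos (h : Body K) {p m : ℝ × ℝ} (hp : p ∉ K) (hm : Tan K ε p m) (hε : ε ≠ 0) :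
    0 < ε * detV p m := by
  have hmp : m - p ≠ 0 := sub_ne_zero.2 (by rintro rfl; exact hp hm.1)
  obtain ⟨r, hr, hb⟩ := Metric.isOpen_iff.1 isOpen_interior 0 h.zero
  -- a point of `K` strictly on the wrong side of the parallel through the origin
  obtain ⟨v, hv⟩ : ∃ v : ℝ × ℝ, ε * detV (m - p) v < 0 := by
    refine ⟨(ε * (m - p).2, -ε * (m - p).1), ?_⟩
    have h1 : 0 < (m - p).1 ^ 2 + (m - p).2 ^ 2 := by
      by_contra hcon
      apply hmp
      have h1 : (m - p).1 = 0 := by nlinarith [sq_nonneg (m - p).1, sq_nonneg (m - p).2]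
      have h2 : (m - p).2 = 0 := by nlinarith [sq_nonneg (m - p).1, sq_nonneg (m - p).2]
      exact Prod.ext h1 h2
    have h2 : 0 < ε ^ 2 := by positivity
    simp only [detV]
    nlinarith [mul_pos h1 h2]
  obtain ⟨δ, hδ, hδK⟩ : ∃ δ > (0 : ℝ), δ • v ∈ K := by
    refine ⟨r / (2 * (‖v‖ + 1)), by positivity, interior_subset (hb ?_)⟩
    rw [mem_ball_zero_iff, norm_smul, Real.norm_of_nonneg (by positivity), div_mul_eq_mul_div,
      div_lt_iff₀ (by positivity)]
    nlinarith [norm_nonneg v]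
  have h1 := hm.2 _ hδK
  have h2 : ε * detV (m - p) (δ • v - p) = δ * (ε * detV (m - p) v) + ε * detV p m := by
    simp only [detV, Prod.smul_fst, Prod.smul_snd, Prod.fst_sub, Prod.snd_sub, smul_eq_mul]
    ring
  nlinarith [mul_neg_of_pos_of_neg hδ hv]

end Body

/-- The contact points from `p` and from `c • p` move monotonically, and the reflected points
turn by at least the area swept between them. -/
lemma Tan.twist {p m n : ℝ × ℝ} {c : ℝ} (hc : 1 ≤ c) (hm : Tan K ε p m)
    (hn : Tan K ε (c • p) n) (hcn : c = 1 → n = m) :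
    0 ≤ ε * detV m (n - m) ∧
    2 * (c - 1) * (ε * detV p m) + 2 * (ε * detV m (n - m)) ≤
      ε * detV ((2 : ℝ) • m - p) ((2 : ℝ) • n - c • p) := by
  have h1 := hm.2 n hn.1
  have h2 := hn.2 m hm.1
  have e1 : detV (m - p) (n - p) = detV m (n - m) - detV p (n - m) := by
    simp only [detV, Prod.fst_sub, Prod.snd_sub]; ring
  have e2 : detV (n - c • p) (m - c • p) = -(detV m (n - m) - c * detV p (n - m)) := by
    simp only [detV, Prod.fst_sub, Prod.snd_sub, Prod.smul_fst, Prod.smul_snd, smul_eq_mul]; ring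
  have e3 : detV ((2 : ℝ) • m - p) ((2 : ℝ) • n - c • p) =
      2 * (c - 1) * detV p m + 2 * detV m (n - m) + 2 * (detV m (n - m) - detV p (n - m)) := by
    simp only [detV, Prod.fst_sub, Prod.snd_sub, Prod.smul_fst, Prod.smul_snd, smul_eq_mul]; ring
  rw [e1] at h1
  rw [e2] at h2
  rw [e3]
  have h3 : 0 ≤ (c - 1) * (ε * detV p (n - m)) := by nlinarith
  have h4 : 0 ≤ ε * detV m (n - m) := by
    rcases hc.lt_or_eq with hc | hc
    · have := nonneg_of_mul_nonneg_right h3 (sub_pos.2 hc)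
      nlinarith
    · rw [hcn hc.symm]; simp [detV]
  exact ⟨h4, by nlinarith⟩

lemma abs_detV_le (u v : ℝ × ℝ) : |detV u v| ≤ 2 * ‖u‖ * ‖v‖ := by
  have h1 : |u.1| ≤ ‖u‖ := norm_fst_le u
  have h2 : |u.2| ≤ ‖u‖ := norm_snd_le u
  have h3 : |v.1| ≤ ‖v‖ := norm_fst_le v
  have h4 : |v.2| ≤ ‖v‖ := norm_snd_le v
  have h5 := abs_sub (u.1 * v.2) (u.2 * v.1)
  rw [abs_mul, abs_mul] at h5
  have h6 := mul_le_mul h1 h4 (abs_nonneg _) (norm_nonneg _)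
  have h7 := mul_le_mul h2 h3 (abs_nonneg _) (norm_nonneg _)
  unfold detV
  linarith

/-- The displacement of the reflected point is bounded by the determinant that measures its turning:
the displacement `n - m` is expanded along `m` and `m - p`, two vectors spanning an area at least
`κ`, and its component along `m` is small when the tangent vector has changed little. -/
lemma Tan.norm_le {p m n : ℝ × ℝ} {c κ R : ℝ} (hε : ε = 1 ∨ ε = -1) (hc : 1 ≤ c)
    (hm : Tan K ε p m) (hn : Tan K ε (c • p) n) (hcn : c = 1 → n = m)
    (hκ : 0 < κ) (hκp : κ ≤ ε * detV p m)
    (hRp : ‖p‖ ≤ R) (hRm : ‖m‖ ≤ R) (hRe : ‖m - p‖ ≤ R)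
    (hsmall : 4 * R * ‖(n - c • p) - (m - p)‖ ≤ κ) :
    ‖((2 : ℝ) • n - c • p) - ((2 : ℝ) • m - p)‖ ≤
      2 * R / κ * (ε * detV ((2 : ℝ) • m - p) ((2 : ℝ) • n - c • p)) := by
  obtain ⟨hpos, htw⟩ := Tan.twist hc hm hn hcn
  obtain ⟨Δ, hΔ⟩ : ∃ Δ, Δ = n - m := ⟨_, rfl⟩
  have hR : 0 ≤ R := (norm_nonneg _).trans hRp
  have h1 := hm.2 n hn.1
  have h2 := hn.2 m hm.1
  have e1 : detV (m - p) (n - p) = detV (m - p) Δ := by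
    rw [hΔ]; simp only [detV, Prod.fst_sub, Prod.snd_sub]; ring
  have e2 : detV (n - c • p) (m - c • p) =
      -(detV (m - p) Δ + detV ((n - c • p) - (m - p)) Δ) := by
    rw [hΔ]
    simp only [detV, Prod.fst_sub, Prod.snd_sub, Prod.smul_fst, Prod.smul_snd, smul_eq_mul]; ring
  rw [e1] at h1
  rw [e2] at h2
  have hεabs : ∀ x : ℝ, |ε * x| = |x| := by
    intro x; rcases hε with rfl | rfl <;> simp
  have h3 : |detV (m - p) Δ| ≤ 2 * ‖(n - c • p) - (m - p)‖ * ‖Δ‖ := by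
    rw [← hεabs, abs_of_nonneg h1]
    refine le_trans ?_ (abs_detV_le _ _)
    rw [← hεabs]
    refine le_trans ?_ (neg_le_abs _)
    linarith
  rw [← hΔ] at hpos htw
  -- Cramer's rule for `Δ` in the basis `m, m - p`
  have h4 : detV p m • Δ = (-detV (m - p) Δ) • m + detV m Δ • (m - p) := by
    ext <;> simp only [detV, Prod.fst_sub, Prod.snd_sub, Prod.smul_fst, Prod.smul_snd,
      Prod.fst_add, Prod.snd_add, smul_eq_mul] <;> ring
  have h5 : κ * ‖Δ‖ ≤ |detV (m - p) Δ| * R + (ε * detV m Δ) * R := by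
    calc κ * ‖Δ‖ ≤ |detV p m| * ‖Δ‖ := by
          gcongr
          rw [← hεabs]; exact hκp.trans (le_abs_self _)
      _ = ‖detV p m • Δ‖ := by rw [norm_smul, Real.norm_eq_abs]
      _ ≤ |detV (m - p) Δ| * ‖m‖ + |detV m Δ| * ‖m - p‖ := by
          rw [h4]
          refine (norm_add_le _ _).trans ?_
          rw [norm_smul, norm_smul, norm_neg, Real.norm_eq_abs, Real.norm_eq_abs]
      _ ≤ _ := by
          rw [← hεabs (detV m Δ), abs_of_nonneg hpos]
          gcongr
  have h6 : |detV (m - p) Δ| * R ≤ κ / 2 * ‖Δ‖ := by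
    have := mul_le_mul_of_nonneg_right h3 hR
    have := mul_le_mul_of_nonneg_right hsmall (norm_nonneg Δ)
    nlinarith
  have h7 : ‖Δ‖ ≤ 2 * R / κ * (ε * detV m Δ) := by
    rw [div_mul_eq_mul_div, le_div_iff₀ hκ]
    linarith
  have e4 : ((2 : ℝ) • n - c • p) - ((2 : ℝ) • m - p) = (2 : ℝ) • Δ - (c - 1) • p := by
    rw [hΔ]; module
  rw [e4]
  have h8 : ‖(2 : ℝ) • Δ - (c - 1) • p‖ ≤ 2 * ‖Δ‖ + (c - 1) * R := by
    refine (norm_sub_le _ _).trans ?_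
    rw [norm_smul, norm_smul, Real.norm_of_nonneg (sub_nonneg.2 hc), Real.norm_ofNat]
    gcongr
  have h9 : (c - 1) * R ≤ 2 * R / κ * (2 * (c - 1) * (ε * detV p m)) := by
    rw [div_mul_eq_mul_div, le_div_iff₀ hκ]
    have : (c - 1) * R * κ ≤ (c - 1) * R * (ε * detV p m) := by
      have := sub_nonneg.2 hc
      gcongr
    have h0 : 0 ≤ (c - 1) * R * (ε * detV p m) :=
      mul_nonneg (mul_nonneg (sub_nonneg.2 hc) hR) (hκ.le.trans hκp)
    nlinarith
  have h10 := mul_le_mul_of_nonneg_left htw (show 0 ≤ 2 * R / κ by positivity)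
  rw [mul_add] at h10
  linarith

namespace Body

lemma twist (h : Body K) (hε : ε = 1 ∨ ε = -1) {p : ℝ × ℝ} (hp : p ∉ K) {c : ℝ} (hc : 1 < c) :
    0 < ε * detV (bill K ε p) (bill K ε (c • p)) := by
  have hε0 : ε ≠ 0 := by rcases hε with rfl | rfl <;> norm_num
  obtain ⟨h1, h2⟩ := Tan.twist hc.le (h.tan_tanPt ε p) (h.tan_tanPt ε (c • p))
    (fun h => absurd h hc.ne')
  have h3 := h.tan_pos hp (h.tan_tanPt ε p) hε0
  have h4 := mul_pos (sub_pos.2 hc) h3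
  unfold bill
  linarith

/-- Quantitative twist along a compact set of base points: the displacement of the image of a
radial segment is controlled by its displacement in the angular direction. -/
lemma exists_growth (h : Body K) (hε : ε = 1 ∨ ε = -1) {C : Set (ℝ × ℝ)} (hC : IsCompact C)
    (hCne : C.Nonempty) (hCK : ∀ p ∈ C, p ∉ K) :
    ∃ Λ > (0 : ℝ), ∃ δ > (0 : ℝ), ∃ κ > (0 : ℝ), ∀ p ∈ C, ∀ c ∈ Icc 1 (1 + δ),
      2 * (c - 1) * κ ≤ ε * detV (bill K ε p) (bill K ε (c • p)) ∧
      ‖bill K ε (c • p) - bill K ε p‖ ≤ Λ * (ε * detV (bill K ε p) (bill K ε (c • p))) := by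
  have hε0 : ε ≠ 0 := by rcases hε with rfl | rfl <;> norm_num
  have hmc := h.continuous_tanPt hε0
  obtain ⟨p₀, hp₀, hmin⟩ := hC.exists_isMinOn (f := fun p => ε * detV p (tanPt K ε p)) hCne
    (continuous_const.mul (detV_continuous continuous_id hmc)).continuousOn
  obtain ⟨κ, hκdef⟩ : ∃ κ, κ = ε * detV p₀ (tanPt K ε p₀) := ⟨_, rfl⟩
  have hκ : 0 < κ := hκdef ▸ h.tan_pos (hCK p₀ hp₀) (h.tan_tanPt ε p₀) hε0
  obtain ⟨R₁, hR₁⟩ := hC.isBounded.exists_norm_le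
  obtain ⟨R₂, hR₂⟩ := h.compact.isBounded.exists_norm_le
  obtain ⟨R, hR⟩ : ∃ R, R = |R₁| + |R₂| + 1 := ⟨_, rfl⟩
  have hR0 : 0 < R := by rw [hR]; positivity
  have hev : ∀ᶠ c in nhds (1 : ℝ), ∀ p ∈ C,
      4 * R * ‖(tanPt K ε (c • p) - c • p) - (tanPt K ε p - p)‖ < κ := by
    refine hC.eventually_forall_of_forall_eventually
      (P := fun (c : ℝ) (p : ℝ × ℝ) =>
        4 * R * ‖(tanPt K ε (c • p) - c • p) - (tanPt K ε p - p)‖ < κ) ?_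
    intro p hp
    have hcont : Continuous fun z : ℝ × (ℝ × ℝ) =>
        4 * R * ‖(tanPt K ε (z.1 • z.2) - z.1 • z.2) - (tanPt K ε z.2 - z.2)‖ := by
      fun_prop
    exact hcont.continuousAt.eventually_lt continuousAt_const (by simpa using hκ)
  obtain ⟨δ, hδ, hball⟩ := Metric.eventually_nhds_iff.1 hev
  refine ⟨2 * R / κ, by positivity, δ / 2, by positivity, κ, hκ, fun p hp c hc => ?_⟩
  have hκp : κ ≤ ε * detV p (tanPt K ε p) := hκdef ▸ hmin hp
  have hcn : c = 1 → tanPt K ε (c • p) = tanPt K ε p := by rintro rfl; simp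
  have hm := h.tan_tanPt ε p
  have hn := h.tan_tanPt ε (c • p)
  have hp1 := hR₁ p hp
  have hm1 := hR₂ _ hm.1
  have a1 := le_abs_self R₁
  have a2 := le_abs_self R₂
  have a3 := abs_nonneg R₁
  have a4 := abs_nonneg R₂
  refine ⟨?_, ?_⟩
  · obtain ⟨h1, h2⟩ := Tan.twist hc.1 hm hn hcn
    have h3 := mul_le_mul_of_nonneg_left hκp (sub_nonneg.2 hc.1)
    unfold bill
    linarith
  · refine Tan.norm_le hε hc.1 hm hn hcn hκ hκp (by linarith) (by linarith) ?_ ?_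
    · refine (norm_sub_le _ _).trans ?_
      linarith
    · refine (hball ?_ p hp).le
      rw [Real.dist_eq, abs_lt]
      constructor <;> linarith [hc.1, hc.2]

end Body

end Tangent

/-! ### Area preservation -/

section Area

lemma det_eq_detV (L : (ℝ × ℝ) →L[ℝ] ℝ × ℝ) : L.det = detV (L (1, 0)) (L (0, 1)) := by
  change LinearMap.det (L : (ℝ × ℝ) →ₗ[ℝ] ℝ × ℝ) = _
  rw [← LinearMap.det_toMatrix (Module.Basis.finTwoProd ℝ), Matrix.det_fin_two]
  simp [LinearMap.toMatrix_apply, detV]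
  ring

/-- The boundary of `K` as a regular closed curve with velocity `γ'`, turning counterclockwise
around `O`. -/
structure BdryCurve (K : Set (ℝ × ℝ)) (O : ℝ × ℝ) (γ γ' γ'' : ℝ → ℝ × ℝ) : Prop where
  mem : O ∈ interior K
  deriv : ∀ θ, HasDerivAt γ (γ' θ) θ
  deriv2 : ∀ θ, HasDerivAt γ' (γ'' θ) θ
  front : frontier K = range γ
  per : ∀ θ, γ (θ + 2 * π) = γ θ
  per' : ∀ θ, γ' (θ + 2 * π) = γ' θ
  inj : InjOn γ (Ico 0 (2 * π))
  pos : ∀ θ, 0 < detV (γ' θ) (O - γ θ)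

lemma eq_of_cos_sin {x y : ℝ} (hx : x ∈ Ico 0 (2 * π)) (hy : y ∈ Ico 0 (2 * π))
    (hc : Real.cos x = Real.cos y) (hs : Real.sin x = Real.sin y) : x = y := by
  have := Real.Angle.cos_sin_inj hc hs
  rw [Real.Angle.angle_eq_iff_two_pi_dvd_sub] at this
  obtain ⟨k, hk⟩ := this
  have hpi := Real.pi_pos
  have h1 : (k : ℝ) < 1 := by
    by_contra! h
    nlinarith [hx.1, hx.2, hy.1, hy.2]
  have h2 : (-1 : ℝ) < k := by
    by_contra! h
    nlinarith [hx.1, hx.2, hy.1, hy.2]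
  have h3 : k = 0 := by
    have h1' : k < 1 := by exact_mod_cast h1
    have h2' : -1 < k := by exact_mod_cast h2
    omega
  rw [h3] at hk
  simp at hk
  linarith

lemma hasDerivAt_uVec (θ : ℝ) : HasDerivAt uVec (-Real.sin θ, Real.cos θ) θ :=
  (Real.hasDerivAt_cos θ).prodMk (Real.hasDerivAt_sin θ)

lemma contDiff_uVec {n : WithTop ℕ∞} : ContDiff ℝ n uVec :=
  Real.contDiff_cos.prodMk Real.contDiff_sin

lemma uVec_add_two_pi (φ : ℝ) : uVec (φ + 2 * π) = uVec φ := by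
  simp [uVec]

lemma smul_uVec_inj {a b φ ψ : ℝ} (ha : 0 < a) (hb : 0 < b) (h : a • uVec φ = b • uVec ψ) :
    a = b ∧ Real.cos φ = Real.cos ψ ∧ Real.sin φ = Real.sin ψ := by
  have h1 : a * Real.cos φ = b * Real.cos ψ := congrArg Prod.fst h
  have h2 : a * Real.sin φ = b * Real.sin ψ := congrArg Prod.snd h
  have h3 : a ^ 2 = b ^ 2 := by
    calc a ^ 2 = (a * Real.cos φ) ^ 2 + (a * Real.sin φ) ^ 2 := by
          linear_combination -a ^ 2 * Real.sin_sq_add_cos_sq φ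
      _ = b ^ 2 := by
          rw [h1, h2]; linear_combination b ^ 2 * Real.sin_sq_add_cos_sq ψ
  have h4 : a = b := by
    have := abs_eq_abs.2 (sq_eq_sq_iff_eq_or_eq_neg.1 h3)
    rwa [abs_of_pos ha, abs_of_pos hb] at this
  subst h4
  exact ⟨rfl, mul_left_cancel₀ ha.ne' h1, mul_left_cancel₀ ha.ne' h2⟩

lemma HasC2PosCurvBoundary.bdryCurve {K : Set (ℝ × ℝ)} {O : ℝ × ℝ} {r : ℝ → ℝ}
    (h : HasC2PosCurvBoundary K O r) : ∃ γ γ' γ'', BdryCurve K O γ γ' γ'' := by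
  obtain ⟨hO, hr, hper, hpos, -, hfr⟩ := h
  obtain ⟨γ, hγ⟩ : ∃ γ : ℝ → ℝ × ℝ, γ = fun θ => O + r θ • uVec θ := ⟨_, rfl⟩
  have hγ2 : ContDiff ℝ 2 γ := by
    rw [hγ]
    exact contDiff_const.add (hr.smul contDiff_uVec)
  have hγ1 : ContDiff ℝ 1 (deriv γ) := by
    have : ContDiff ℝ (1 + 1) γ := by norm_num; exact hγ2
    exact (contDiff_succ_iff_deriv.1 this).2.2
  have hd : ∀ θ, HasDerivAt γ (deriv γ θ) θ := fun θ =>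
    ((hγ2.differentiable (by norm_num)) θ).hasDerivAt
  have hp : ∀ θ, γ (θ + 2 * π) = γ θ := fun θ => by
    simp only [hγ, hper, uVec_add_two_pi]
  refine ⟨γ, deriv γ, deriv (deriv γ), hO, hd, fun θ =>
    ((hγ1.differentiable (by norm_num)) θ).hasDerivAt, ?_, hp, ?_, ?_, ?_⟩
  · rw [hfr, hγ]
    ext p
    exact ⟨fun ⟨φ, h⟩ => ⟨φ, h.symm⟩, fun ⟨φ, h⟩ => ⟨φ, h.symm⟩⟩
  · intro θ
    rw [← deriv_comp_add_const]
    congr 1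
    ext1 x
    exact hp x
  · intro x hx y hy hxy
    simp only [hγ, add_right_inj] at hxy
    obtain ⟨-, h1, h2⟩ := smul_uVec_inj (hpos x) (hpos y) hxy
    exact eq_of_cos_sin hx hy h1 h2
  · intro θ
    have h1 : HasDerivAt γ (r θ • (-Real.sin θ, Real.cos θ) + deriv r θ • uVec θ) θ := by
      rw [hγ]
      exact (((hr.differentiable (by norm_num)) θ).hasDerivAt.smul
        (hasDerivAt_uVec θ)).const_add O
    rw [h1.deriv, hγ]
    have h2 : detV (r θ • (-Real.sin θ, Real.cos θ) + deriv r θ • uVec θ)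
        (O - (O + r θ • uVec θ)) = r θ ^ 2 := by
      simp only [detV, uVec, Prod.smul_fst, Prod.smul_snd, Prod.fst_add, Prod.snd_add,
        Prod.fst_sub, Prod.snd_sub, smul_eq_mul]
      linear_combination r θ ^ 2 * Real.sin_sq_add_cos_sq θ
    rw [h2]
    have := hpos θ
    positivity

variable {K : Set (ℝ × ℝ)} {O : ℝ × ℝ} {γ γ' γ'' : ℝ → ℝ × ℝ}

lemma hasDerivAt_detV_const {f : ℝ → ℝ × ℝ} {f' : ℝ × ℝ} {θ : ℝ} (v : ℝ × ℝ)
    (hf : HasDerivAt f f' θ) : HasDerivAt (fun x => detV v (f x)) (detV v f') θ := by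
  have h1 : HasDerivAt (fun x => (f x).1) f'.1 θ :=
    (ContinuousLinearMap.fst ℝ ℝ ℝ).hasFDerivAt.comp_hasDerivAt θ hf
  have h2 : HasDerivAt (fun x => (f x).2) f'.2 θ :=
    (ContinuousLinearMap.snd ℝ ℝ ℝ).hasFDerivAt.comp_hasDerivAt θ hf
  exact (h2.const_mul v.1).sub (h1.const_mul v.2)

namespace BdryCurve

lemma ne_zero (hγ : BdryCurve K O γ γ' γ'') (θ : ℝ) : γ' θ ≠ 0 := fun h0 => by
  have := hγ.pos θ
  rw [h0] at this
  simp [detV] at this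

lemma mem_body (hγ : BdryCurve K O γ γ' γ'') (h : Body K) (θ : ℝ) : γ θ ∈ K :=
  h.compact.isClosed.frontier_subset (hγ.front ▸ mem_range_self θ)

/-- The body lies to the left of its tangent lines. -/
lemma support (hγ : BdryCurve K O γ γ' γ'') (h : Body K) (θ : ℝ) :
    ∀ k ∈ K, 0 ≤ detV (γ' θ) (k - γ θ) := by
  have hx : γ θ ∉ interior K := by
    have : γ θ ∈ frontier K := hγ.front ▸ mem_range_self θ
    exact this.2
  obtain ⟨f, hf⟩ := geometric_hahn_banach_open_point h.conv.interior isOpen_interior hx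
  have hle : ∀ k ∈ K, f k ≤ f (γ θ) := by
    intro k hk
    have hcl : k ∈ closure (interior K) := by
      rw [h.conv.closure_interior_eq_closure_of_nonempty_interior ⟨0, h.zero⟩]
      exact subset_closure hk
    exact closure_minimal (fun a ha => (hf a ha).le)
      (isClosed_le f.continuous continuous_const) hcl
  have hmax : IsLocalMax (fun x => f (γ x)) θ :=
    Filter.Eventually.of_forall fun x => hle _ (hγ.mem_body h x)
  have hd0 : f (γ' θ) = 0 :=
    hmax.hasDerivAt_eq_zero (f.hasFDerivAt.comp_hasDerivAt θ (hγ.deriv θ))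
  have hfe : ∀ v : ℝ × ℝ, f v = f (1, 0) * v.1 + f (0, 1) * v.2 := by
    intro v
    have : v = v.1 • ((1, 0) : ℝ × ℝ) + v.2 • ((0, 1) : ℝ × ℝ) := by
      ext <;> simp
    conv_lhs => rw [this]
    rw [map_add, map_smul, map_smul, smul_eq_mul, smul_eq_mul]
    ring
  intro k hk
  -- `f` vanishes on the tangent direction, hence is proportional to `detV (γ' θ)`
  have key : detV (γ' θ) (k - γ θ) * f (O - γ θ) = detV (γ' θ) (O - γ θ) * f (k - γ θ) := by
    rw [hfe] at hd0
    rw [hfe (O - γ θ), hfe (k - γ θ)]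
    simp only [detV]
    linear_combination ((k - γ θ).2 * (O - γ θ).1 - (k - γ θ).1 * (O - γ θ).2) * hd0
  have h1 : f (O - γ θ) < 0 := by rw [map_sub]; linarith [hf O hγ.mem]
  have h2 : f (k - γ θ) ≤ 0 := by rw [map_sub]; linarith [hle k hk]
  have h3 := hγ.pos θ
  nlinarith

lemma tan (hγ : BdryCurve K O γ γ' γ'') (h : Body K) (θ : ℝ) {t : ℝ} (ht : 0 < t) :
    Tan K 1 (γ θ - t • γ' θ) (γ θ) := by
  refine ⟨hγ.mem_body h θ, fun k hk => ?_⟩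
  have h1 := mul_nonneg ht.le (hγ.support h θ k hk)
  have h2 : 1 * detV (γ θ - (γ θ - t • γ' θ)) (k - (γ θ - t • γ' θ)) =
      t * detV (γ' θ) (k - γ θ) := by
    simp only [detV, Prod.smul_fst, Prod.smul_snd, Prod.fst_sub, Prod.snd_sub, smul_eq_mul]
    ring
  rwa [h2]

/-- Exterior points have the coordinates `(θ, t)`, given by the tangent line from the point: its
direction at the contact point `γ θ` is that of `γ' θ`. -/
lemma exists_coord (hγ : BdryCurve K O γ γ' γ'') (h : Body K) {A : ℝ × ℝ} (hA : A ∉ K) :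
    ∃ θ ∈ Ico 0 (2 * π), ∃ t > (0 : ℝ), A = γ θ - t • γ' θ := by
  obtain ⟨m, hm⟩ := h.tan_exists 1 A
  have hmA : m - A ≠ 0 := sub_ne_zero.2 (by rintro rfl; exact hA hm.1)
  have hmf : m ∈ frontier K := by
    refine ⟨subset_closure hm.1, fun hi => ?_⟩
    -- an interior point of contact could be moved to the wrong side of the line
    have hc : Continuous fun s : ℝ => m + s • ((m - A).2, -(m - A).1) := by fun_prop
    have hev : ∀ᶠ s in nhds (0 : ℝ), m + s • ((m - A).2, -(m - A).1) ∈ interior K :=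
      hc.continuousAt.eventually_mem (by simpa using isOpen_interior.mem_nhds hi)
    obtain ⟨s, hs, hs0⟩ := ((hev.filter_mono (nhdsWithin_le_nhds (s := Ioi 0))).and
      self_mem_nhdsWithin).exists
    have h1 := hm.2 _ (interior_subset hs)
    have h2 : 1 * detV (m - A) (m + s • ((m - A).2, -(m - A).1) - A) =
        -(s * ((m - A).1 ^ 2 + (m - A).2 ^ 2)) := by
      simp only [detV, Prod.smul_fst, Prod.smul_snd, Prod.fst_sub, Prod.snd_sub, Prod.fst_add,
        Prod.snd_add, smul_eq_mul]
      ring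
    rw [h2] at h1
    have hs0' : 0 < s := hs0
    have h3 : (m - A).1 ^ 2 + (m - A).2 ^ 2 ≤ 0 := by
      by_contra! hcon
      nlinarith [mul_pos hs0' hcon]
    apply hmA
    have h1 : (m - A).1 = 0 := by nlinarith [sq_nonneg (m - A).1, sq_nonneg (m - A).2]
    have h2 : (m - A).2 = 0 := by nlinarith [sq_nonneg (m - A).1, sq_nonneg (m - A).2]
    exact Prod.ext h1 h2
  rw [hγ.front] at hmf
  obtain ⟨θ', hθ'⟩ := hmf
  obtain ⟨θ, hθ, hθe⟩ := Function.Periodic.exists_mem_Ico₀ (f := γ) hγ.per two_pi_pos θ'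
  rw [hθe] at hθ'
  subst hθ'
  have hmin : IsLocalMin (fun x => detV (γ θ - A) (γ x - A)) θ := by
    refine Filter.Eventually.of_forall fun x => ?_
    have := hm.2 _ (hγ.mem_body h x)
    rw [one_mul] at this
    have h0 : detV (γ θ - A) (γ θ - A) = 0 := by simp only [detV]; ring
    change detV (γ θ - A) (γ θ - A) ≤ _
    rwa [h0]
  have hd0 := hmin.hasDerivAt_eq_zero (hasDerivAt_detV_const _ ((hγ.deriv θ).sub_const A))
  rw [detV_swap, neg_eq_zero] at hd0
  obtain ⟨t, ht⟩ := eq_smul_of_detV_eq_zero (hγ.ne_zero θ) hd0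
  refine ⟨θ, hθ, t, ?_, by rw [← ht]; abel⟩
  have h1 := hm.2 O (interior_subset hγ.mem)
  have h2 : 1 * detV (γ θ - A) (O - A) = t * detV (γ' θ) (O - γ θ) := by
    have : O - A = (O - γ θ) + (γ θ - A) := by abel
    rw [this, ht]
    simp only [detV, Prod.smul_fst, Prod.smul_snd, Prod.fst_add, Prod.snd_add, smul_eq_mul]
    ring
  rw [h2] at h1
  have h3 := nonneg_of_mul_nonneg_left h1 (hγ.pos θ)
  refine lt_of_le_of_ne h3 ?_
  rintro rfl
  apply hmA
  rw [ht, zero_smul]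

/-- In the coordinates `(θ, t) ↦ γ θ - t • γ' θ` of the exterior, the billiard map becomes
`(θ, t) ↦ γ θ + t • γ' θ`, and both parametrizations have the same Jacobian up to sign. -/
lemma volume_image (hγ : BdryCurve K O γ γ' γ'') (h : Body K) {X : Set (ℝ × ℝ)} (hX : IsOpen X)
    (hXK : Disjoint X K) : volume (bill K 1 '' X) = volume X := by
  set Φ : ℝ → ℝ × ℝ → ℝ × ℝ := fun s z => γ z.1 + (s * z.2) • γ' z.1 with hΦ
  have hγc : Continuous γ := continuous_iff_continuousAt.2 fun θ => (hγ.deriv θ).continuousAt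
  have hγc' : Continuous γ' := continuous_iff_continuousAt.2 fun θ => (hγ.deriv2 θ).continuousAt
  have hΦc : ∀ s, Continuous (Φ s) := fun s => by simp only [hΦ]; fun_prop
  set S : Set (ℝ × ℝ) := {z | z.1 ∈ Ico 0 (2 * π) ∧ 0 < z.2 ∧ Φ (-1) z ∈ X} with hS
  have hSm : MeasurableSet S := by
    refine (measurable_fst measurableSet_Ico).inter ((measurable_snd measurableSet_Ioi).inter ?_)
    exact (hX.preimage (hΦc (-1))).measurableSet
  have hminus : ∀ z : ℝ × ℝ, Φ (-1) z = γ z.1 - z.2 • γ' z.1 := fun z => by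
    simp only [hΦ]; module
  have hbill : ∀ z ∈ S, bill K 1 (Φ (-1) z) = Φ 1 z := by
    intro z hz
    rw [bill, hminus, h.tanPt_eq one_ne_zero (hγ.tan h z.1 hz.2.1)]
    simp only [hΦ]; module
  have him : Φ (-1) '' S = X := by
    apply Subset.antisymm
    · rintro _ ⟨z, hz, rfl⟩
      exact hz.2.2
    · intro A hA
      obtain ⟨θ, hθ, t, ht, rfl⟩ := hγ.exists_coord h (Set.disjoint_left.1 hXK hA)
      have : Φ (-1) (θ, t) = γ θ - t • γ' θ := hminus _
      exact ⟨(θ, t), ⟨hθ, ht, this ▸ hA⟩, this⟩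
  have him' : Φ 1 '' S = bill K 1 '' X := by
    rw [← him, image_image]
    exact image_congr fun z hz => (hbill z hz).symm
  have hinj : InjOn (Φ (-1)) S := by
    intro z hz w hw hzw
    have h1 := h.tanPt_eq one_ne_zero (hγ.tan h z.1 hz.2.1)
    have h2 := h.tanPt_eq one_ne_zero (hγ.tan h w.1 hw.2.1)
    rw [← hminus] at h1 h2
    rw [hzw, h2] at h1
    have h3 := hγ.inj hw.1 hz.1 h1
    rw [hminus, hminus, h3, sub_right_inj] at hzw
    exact Prod.ext h3.symm (smul_left_injective ℝ (hγ.ne_zero z.1) hzw)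
  have hinj' : InjOn (Φ 1) S := by
    intro z hz w hw hzw
    rw [← hbill z hz, ← hbill w hw] at hzw
    exact hinj hz hw ((h.homeo one_ne_zero).injective hzw)
  set D : ℝ → ℝ × ℝ → (ℝ × ℝ) →L[ℝ] ℝ × ℝ := fun s z =>
    (ContinuousLinearMap.fst ℝ ℝ ℝ).smulRight (γ' z.1 + (s * z.2) • γ'' z.1) +
      (ContinuousLinearMap.snd ℝ ℝ ℝ).smulRight (s • γ' z.1) with hD
  have hderiv : ∀ s z, HasFDerivAt (Φ s) (D s z) z := by
    intro s z
    have h1 : HasFDerivAt (fun z : ℝ × ℝ => γ z.1) _ z :=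
      (hγ.deriv z.1).hasFDerivAt.comp z (ContinuousLinearMap.fst ℝ ℝ ℝ).hasFDerivAt
    have h2 : HasFDerivAt (fun z : ℝ × ℝ => γ' z.1) _ z :=
      (hγ.deriv2 z.1).hasFDerivAt.comp z (ContinuousLinearMap.fst ℝ ℝ ℝ).hasFDerivAt
    have h3 : HasFDerivAt (fun z : ℝ × ℝ => s * z.2) (s • ContinuousLinearMap.snd ℝ ℝ ℝ) z :=
      (ContinuousLinearMap.snd ℝ ℝ ℝ).hasFDerivAt.const_mul s
    refine (h1.add (h3.smul h2)).congr_fderiv ?_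
    ext <;> simp [hD]
  have hdet : ∀ s, s = 1 ∨ s = -1 → ∀ z, (D s z).det = z.2 * detV (γ'' z.1) (γ' z.1) := by
    intro s hs z
    rw [det_eq_detV]
    rcases hs with rfl | rfl <;> simp [hD, detV] <;> ring
  rw [← him', ← him, ← lintegral_abs_det_fderiv_eq_addHaar_image volume hSm
    (fun z _ => (hderiv 1 z).hasFDerivWithinAt) hinj',
    ← lintegral_abs_det_fderiv_eq_addHaar_image volume hSm
    (fun z _ => (hderiv (-1) z).hasFDerivWithinAt) hinj]
  simp only [hdet 1 (.inl rfl), hdet (-1) (.inr rfl)]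

end BdryCurve

end Area

/-! ### Boundedness of the inner component -/

section Component

lemma homotopic_of_avoids {X : Type*} [TopologicalSpace X] {K : Set (ℝ × ℝ)}
    (g₀ g₁ : C(X, (Kᶜ : Set (ℝ × ℝ)))) (H : unitInterval → X → ℝ × ℝ)
    (hH : Continuous fun q : unitInterval × X => H q.1 q.2) (hK : ∀ s x, H s x ∉ K)
    (h0 : ∀ x, H 0 x = g₀ x) (h1 : ∀ x, H 1 x = g₁ x) : g₀.Homotopic g₁ :=
  ⟨{ toFun := fun q => ⟨H q.1 q.2, hK _ _⟩
     continuous_toFun := hH.subtype_mk _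
     map_zero_left := fun x => Subtype.ext (h0 x)
     map_one_left := fun x => Subtype.ext (h1 x) }⟩

/-- If the component of `0` in the complement of a loop is unbounded, the loop contracts in the
exterior of `K`: the difference of the loop and a point moving from `0` to a faraway point never
vanishes, so a large multiple of it avoids `K`. -/
lemma isBounded_component {X : Type*} [TopologicalSpace X] [CompactSpace X] [Nonempty X] {K : Set (ℝ × ℝ)}
    (hcomp : IsCompact K) (hconv : Convex ℝ K) (hzero : (0 : ℝ × ℝ) ∈ K)
    (f : C(X, (Kᶜ : Set (ℝ × ℝ)))) {C : Set (ℝ × ℝ)} (hC : C = Subtype.val '' Set.range f)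
    (hnc : ¬ ∃ c : (Kᶜ : Set (ℝ × ℝ)), ContinuousMap.Homotopic f (ContinuousMap.const _ c)) :
    Bornology.IsBounded (connectedComponentIn Cᶜ 0) := by
  by_contra hub
  apply hnc
  have hfC : ∀ t, (f t : ℝ × ℝ) ∈ C := fun t => hC ▸ ⟨f t, ⟨t, rfl⟩, rfl⟩
  have hCc : IsCompact C := hC ▸ (isCompact_range f.continuous).image continuous_subtype_val
  have h0C : (0 : ℝ × ℝ) ∈ Cᶜ := by
    rw [hC]
    rintro ⟨y, -, hy⟩
    exact y.2 (hy ▸ hzero)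
  obtain ⟨B, hB⟩ := hCc.isBounded.exists_norm_le
  obtain ⟨R, hR⟩ := hcomp.isBounded.exists_norm_le
  have hR0 : 0 ≤ R := (norm_nonneg _).trans (hR 0 hzero)
  obtain ⟨x, hx, hxB⟩ : ∃ x ∈ connectedComponentIn Cᶜ 0, B + 1 < ‖x‖ := by
    by_contra! hcon
    exact hub (isBounded_iff_forall_norm_le.2 ⟨_, hcon⟩)
  have hUo : IsOpen (connectedComponentIn Cᶜ (0 : ℝ × ℝ)) :=
    hCc.isClosed.isOpen_compl.connectedComponentIn
  have hUp := (IsOpen.isConnected_iff_isPathConnected hUo).1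
    (isConnected_connectedComponentIn_iff.2 h0C)
  have hj := hUp.joinedIn 0 (mem_connectedComponentIn h0C) x hx
  set γ := hj.somePath
  have hγ : ∀ s, γ s ∈ Cᶜ := fun s => connectedComponentIn_subset _ _ (hj.somePath_mem s)
  obtain ⟨δ, hδ, hdist⟩ := exists_pos_le_dist (isCompact_range γ.continuous) hCc.isClosed
    (Set.disjoint_left.2 (by rintro _ ⟨s, rfl⟩ h; exact hγ s h))
  -- `M` makes every vector of norm at least `min δ 1` leave the ball of radius `R`.
  obtain ⟨M, hM1, hM⟩ : ∃ M : ℝ, 1 ≤ M ∧ ∀ v : ℝ × ℝ, min δ 1 ≤ ‖v‖ → M • v ∉ K := by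
    have hm : 0 < min δ 1 := lt_min hδ one_pos
    refine ⟨max 1 ((R + 1) / min δ 1), le_max_left _ _, fun v hv hvK => ?_⟩
    have h1 := hR _ hvK
    have h2 : (R + 1) / min δ 1 ≤ max 1 ((R + 1) / min δ 1) := le_max_right _ _
    rw [norm_smul, Real.norm_of_nonneg (by positivity)] at h1
    have h3 : (R + 1) / min δ 1 * min δ 1 ≤ max 1 ((R + 1) / min δ 1) * ‖v‖ := by gcongr
    rw [div_mul_cancel₀ _ hm.ne'] at h3
    linarith
  have hscale : ∀ c : ℝ, 1 ≤ c → ∀ t, c • (f t : ℝ × ℝ) ∉ K := fun c hc t hK => by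
    apply (f t).2
    have := hconv.smul_mem_of_zero_mem hzero hK (t := c⁻¹)
      ⟨by positivity, inv_le_one_of_one_le₀ hc⟩
    rwa [smul_smul, inv_mul_cancel₀ (by positivity), one_smul] at this
  have hfar : ∀ s : unitInterval, ∀ t, M • (((1 - s : ℝ) • (f t : ℝ × ℝ)) - x) ∉ K := by
    intro s t
    apply hM
    have h1 : ‖((1 - s : ℝ) • (f t : ℝ × ℝ))‖ ≤ B := by
      rw [norm_smul, Real.norm_of_nonneg (by linarith [s.2.2])]
      have := hB _ (hfC t)
      have h2 := norm_nonneg (f t : ℝ × ℝ)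
      nlinarith [s.2.1, s.2.2]
    have h2 := norm_sub_norm_le x ((1 - s : ℝ) • (f t : ℝ × ℝ))
    rw [norm_sub_rev] at h2
    exact (min_le_right _ _).trans (by linarith)
  have hfc : Continuous fun t => (f t : ℝ × ℝ) := continuous_subtype_val.comp f.continuous
  have hpath : ∀ s t, M • ((f t : ℝ × ℝ) - γ s) ∉ K := by
    intro s t
    apply hM
    have := hdist _ ⟨s, rfl⟩ _ (hfC t)
    rw [dist_comm, dist_eq_norm] at this
    exact (min_le_left _ _).trans this
  have hx' : M • (-x) ∉ K := by
    refine hM _ ?_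
    rw [norm_neg]
    have : 0 ≤ B := (norm_nonneg _).trans (hB _ (hfC (Classical.arbitrary X)))
    exact (min_le_right _ _).trans (by linarith)
  refine ⟨⟨M • (-x), hx'⟩, ?_⟩
  have hc₁ : Continuous fun t => M • (f t : ℝ × ℝ) := by fun_prop
  have hc₂ : Continuous fun t => M • ((f t : ℝ × ℝ) - x) := by fun_prop
  have hK₂ : ∀ t, M • ((f t : ℝ × ℝ) - x) ∉ K := fun t => by simpa using hpath 1 t
  let g₁ : C(X, (Kᶜ : Set (ℝ × ℝ))) := ⟨fun t => ⟨_, hscale M hM1 t⟩, hc₁.subtype_mk _⟩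
  let g₂ : C(X, (Kᶜ : Set (ℝ × ℝ))) := ⟨fun t => ⟨_, hK₂ t⟩, hc₂.subtype_mk _⟩
  have h1 : f.Homotopic g₁ := homotopic_of_avoids _ _
    (fun s t => (1 + s * (M - 1) : ℝ) • (f t : ℝ × ℝ)) (by fun_prop)
    (fun s t => hscale _ (by nlinarith [s.2.1]) t) (by simp) (fun t => by simp [g₁])
  have h2 : g₁.Homotopic g₂ := homotopic_of_avoids _ _
    (fun s t => M • ((f t : ℝ × ℝ) - γ s)) (by fun_prop) hpath (fun t => by simp [g₁])
    (fun t => by simp [g₂])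
  have h3 : g₂.Homotopic (ContinuousMap.const _ ⟨M • (-x), hx'⟩) := homotopic_of_avoids _ _
    (fun s t => M • (((1 - s : ℝ) • (f t : ℝ × ℝ)) - x)) (by fun_prop) hfar
    (fun t => by simp [g₂]) (fun t => by simp)
  exact (h1.trans h2).trans h3

end Component

/-! ### The inner component is invariant -/

section Invariant

lemma frontier_component_subset {C : Set (ℝ × ℝ)} (hC : IsClosed C) (x : ℝ × ℝ) :
    frontier (connectedComponentIn Cᶜ x) ⊆ C := by
  intro y hy
  by_contra hyC
  have hoy := (hC.isOpen_compl.connectedComponentIn (x := y))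
  have hox := (hC.isOpen_compl.connectedComponentIn (x := x))
  obtain ⟨z, hzy, hzx⟩ := mem_closure_iff.1 (frontier_subset_closure hy) _ hoy
    (mem_connectedComponentIn hyC)
  have := (connectedComponentIn_eq hzx).trans (connectedComponentIn_eq hzy).symm
  rw [hox.frontier_eq] at hy
  exact hy.2 (this ▸ mem_connectedComponentIn hyC)

variable {K C : Set (ℝ × ℝ)} {O : ℝ × ℝ} {γ γ' γ'' : ℝ → ℝ × ℝ}

/-- The billiard homeomorphism preserves the complement of an invariant `C` and fixes the origin,
so it preserves the component of the origin. -/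
lemma BdryCurve.twistDom (hγ : BdryCurve K O γ γ' γ'') (h : Body K) (hCc : IsClosed C)
    (hCconn : IsPreconnected C) (hCK : Disjoint C K)
    (hb : Bornology.IsBounded (connectedComponentIn Cᶜ 0)) (hinv : bill K 1 '' C = C) :
    TwistDom (connectedComponentIn Cᶜ 0) C K (h.homeo one_ne_zero) 1 := by
  set F := h.homeo one_ne_zero with hF
  have hFapp : ∀ x, F x = bill K 1 x := fun x => rfl
  have hFsymm : ∀ x, F.symm x = bill K (-1) x := fun x => rfl
  have hKC : K ⊆ Cᶜ := hCK.symm.subset_compl_right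
  have hFU : F '' (connectedComponentIn Cᶜ 0) = connectedComponentIn Cᶜ 0 := by
    rw [F.image_connectedComponentIn (hKC h.zero_mem), image_compl_eq F.bijective]
    rw [hFapp, h.bill_of_mem one_ne_zero h.zero_mem]
    exact congrArg (fun S => connectedComponentIn Sᶜ 0) hinv
  have hFK : ∀ x, F x ∈ K → x ∈ K := fun x hx => by
    by_contra hxK
    exact h.bill_notMem one_ne_zero hxK hx
  refine ⟨⟨hCc.isOpen_compl.connectedComponentIn, isPreconnected_connectedComponentIn, hb,
    frontier_component_subset hCc 0,
    disjoint_compl_left.mono_left (connectedComponentIn_subset _ _), hCconn, hCc,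
    mem_connectedComponentIn (hKC h.zero_mem)⟩, .inl rfl, h.compact.isClosed, h.conv, h.zero_mem,
    h.conv.isPreconnected.subset_connectedComponentIn h.zero_mem hKC, fun x => ?_,
    fun x hx => h.bill_of_mem one_ne_zero hx, fun p hp c hc => h.twist (.inl rfl) hp hc,
    fun p hp c hc => h.twist (.inr rfl) hp hc, fun X hX hXK => hγ.volume_image h hX hXK,
    fun X hX hXK => ?_⟩
  · nth_rw 1 [← hFU]
    exact F.injective.mem_set_image
  · have h1 := hγ.volume_image h (X := F.symm '' X) (F.symm.isOpenMap _ hX) ?_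
    · rw [← h1]
      exact congrArg volume (F.image_symm_image X)
    · rw [Set.disjoint_left]
      rintro _ ⟨x, hx, rfl⟩ hK
      refine Set.disjoint_left.1 hXK hx ?_
      have := h.bill_of_mem one_ne_zero hK
      rw [← hFapp, F.apply_symm_apply] at this
      rwa [this]

end Invariant

/-! ### The radial function -/

/-- The radial function of a domain which is star-shaped about the origin. -/
def radius (U : Set (ℝ × ℝ)) (φ : ℝ) : ℝ := sSup {t : ℝ | 0 ≤ t ∧ t • uVec φ ∈ U}

lemma detV_uVec (φ ψ : ℝ) : detV (uVec φ) (uVec ψ) = sin (ψ - φ) := by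
  simp only [detV, uVec, sin_sub]; ring

lemma uVec_ne_zero (φ : ℝ) : uVec φ ≠ 0 := fun h => by
  have h1 := congrArg Prod.fst h
  have h2 := congrArg Prod.snd h
  simp only [uVec, Prod.fst_zero, Prod.snd_zero] at h1 h2
  have := sin_sq_add_cos_sq φ
  rw [h1, h2] at this
  norm_num at this

lemma norm_uVec_le (φ : ℝ) : ‖uVec φ‖ ≤ 1 :=
  max_le (abs_cos_le_one φ) (abs_sin_le_one φ)

/-- Projection of `s u(φ') - r u(φ)` to the direction `u(φ')`. -/
lemma sub_le_norm_smul_uVec_sub (s r φ φ' : ℝ) (hr : 0 ≤ r) :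
    s - r ≤ 2 * ‖s • uVec φ' - r • uVec φ‖ := by
  set v := s • uVec φ' - r • uVec φ with hv
  have h1 : v.1 = s * cos φ' - r * cos φ := rfl
  have h2 : v.2 = s * sin φ' - r * sin φ := rfl
  have h3 : s - r * cos (φ' - φ) = cos φ' * v.1 + sin φ' * v.2 := by
    rw [h1, h2, cos_sub]
    linear_combination (-s) * sin_sq_add_cos_sq φ'
  have h4 : cos φ' * v.1 ≤ ‖v‖ := by
    refine (le_abs_self _).trans ?_
    rw [abs_mul]
    exact (mul_le_of_le_one_left (abs_nonneg _) (abs_cos_le_one _)).trans (norm_fst_le v)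
  have h5 : sin φ' * v.2 ≤ ‖v‖ := by
    refine (le_abs_self _).trans ?_
    rw [abs_mul]
    exact (mul_le_of_le_one_left (abs_nonneg _) (abs_sin_le_one _)).trans (norm_snd_le v)
  nlinarith [cos_le_one (φ' - φ)]

section Radius

variable {U C K : Set (ℝ × ℝ)}

lemma radius_add_two_pi (U : Set (ℝ × ℝ)) (φ : ℝ) : radius U (φ + 2 * π) = radius U φ := by
  simp only [radius, uVec_add_two_pi]

namespace Dom

lemma exists_radius_bound (h : Dom U C) :
    ∃ R > (0 : ℝ), ∀ φ t : ℝ, 0 ≤ t → t • uVec φ ∈ U → t ≤ R := by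
  obtain ⟨R, hR0, hR⟩ := h.bdd.exists_pos_norm_le
  refine ⟨2 * R, by positivity, fun φ t ht htU => ?_⟩
  have := sub_le_norm_smul_uVec_sub t 0 φ φ le_rfl
  rw [zero_smul, sub_zero, sub_zero] at this
  linarith [hR _ htU]

/-- On each ray, a star-shaped open `U` is the half-open segment of length `radius U φ`. -/
lemma smul_mem_iff (h : Dom U C) (hs : U ⊆ starPart U) {φ t : ℝ} (ht : 0 ≤ t) :
    t • uVec φ ∈ U ↔ t < radius U φ := by
  obtain ⟨R, -, hR⟩ := h.exists_radius_bound
  have hbdd : BddAbove {t : ℝ | 0 ≤ t ∧ t • uVec φ ∈ U} := ⟨R, fun t ht => hR φ t ht.1 ht.2⟩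
  constructor
  · intro htU
    have hc : Continuous fun s : ℝ => s • uVec φ := by fun_prop
    have ho := (h.isOpen.preimage hc)
    obtain ⟨r, hr, hb⟩ := Metric.isOpen_iff.1 ho t htU
    have : t + r / 2 ∈ Metric.ball t r := by
      rw [Metric.mem_ball, dist_eq_norm, add_sub_cancel_left, Real.norm_of_nonneg (by positivity)]
      linarith
    have : t + r / 2 ≤ radius U φ := le_csSup hbdd ⟨by positivity, hb this⟩
    linarith
  · intro hlt
    obtain ⟨s, ⟨hs0, hsU⟩, hts⟩ := exists_lt_of_lt_csSup
      (⟨0, le_rfl, by rw [zero_smul]; exact h.zero⟩ : {t : ℝ | 0 ≤ t ∧ t • uVec φ ∈ U}.Nonempty) hlt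
    have hspos : 0 < s := ht.trans_lt hts
    have := hs hsU (t / s) ⟨by positivity, (div_le_one hspos).2 hts.le⟩
    rwa [smul_smul, div_mul_cancel₀ _ hspos.ne'] at this

lemma radius_pos (h : Dom U C) (hs : U ⊆ starPart U) (φ : ℝ) : 0 < radius U φ :=
  (h.smul_mem_iff hs le_rfl).1 (by rw [zero_smul]; exact h.zero)

lemma radius_smul_mem (h : Dom U C) (hs : U ⊆ starPart U) (φ : ℝ) :
    radius U φ • uVec φ ∈ C := by
  have hpos := h.radius_pos hs φ
  apply h.front
  rw [h.isOpen.frontier_eq]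
  refine mem_sdiff_of_mem ?_ fun hU => lt_irrefl _ ((h.smul_mem_iff hs hpos.le).1 hU)
  have hc : Continuous fun s : ℝ => s • uVec φ := by fun_prop
  have h1 : radius U φ ∈ closure (Ico 0 (radius U φ)) := by
    rw [closure_Ico hpos.ne]
    exact right_mem_Icc.2 hpos.le
  exact (hc.continuousOn.image_closure ⟨_, h1, rfl⟩ : _) |> closure_mono (by
    rintro _ ⟨t, ht, rfl⟩
    exact (h.smul_mem_iff hs ht.1).2 ht.2)

lemma exists_radius_le (h : Dom U C) (hs : U ⊆ starPart U) : ∃ R > (0 : ℝ), ∀ φ, radius U φ ≤ R := by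
  obtain ⟨R, hR0, hR⟩ := h.exists_radius_bound
  refine ⟨R, hR0, fun φ => le_of_forall_lt_imp_le_of_dense fun t ht => ?_⟩
  rcases le_or_gt 0 t with h0 | h0
  · exact hR φ t h0 ((h.smul_mem_iff hs h0).2 ht)
  · linarith

/-- The ray through a point `p ∈ C`, beyond `p`, is mapped by the billiard map to a curve outside
`U` which starts at `w = radius U φ • uVec φ` and turns in the direction `ε` at a definite rate,
so it bounds the radius on that side of `φ`. -/
lemma radius_step (h : Dom U C) (hs : U ⊆ starPart U) (hK : Body K) {ε : ℝ}
    (hε : ε = 1 ∨ ε = -1) (hC : IsCompact C) (hCK : ∀ p ∈ C, p ∉ K)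
    (hU : ∀ x, bill K ε x ∈ U → x ∈ U) (hsurj : ∀ w ∈ C, ∃ p ∈ C, bill K ε p = w) :
    ∃ L > (0 : ℝ), ∃ η₀ > (0 : ℝ), ∀ φ η, 0 < η → η < η₀ →
      radius U (φ + ε * η) ≤ radius U φ + L * η := by
  have hε0 : ε ≠ 0 := by rcases hε with rfl | rfl <;> norm_num
  have hεε : ε * ε = 1 := by rcases hε with rfl | rfl <;> norm_num
  obtain ⟨R, hR0, hR⟩ := h.exists_radius_le hs
  obtain ⟨Λ, hΛ, δ, hδ, κ, hκ, hgrow⟩ := hK.exists_growth hε hC ⟨_, h.radius_smul_mem hs 0⟩ hCK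
  have he1 : 0 < 1 / (8 * R * Λ) := by positivity
  have he2 : 0 < δ * κ / (4 * R ^ 2) := by positivity
  refine ⟨4 * Λ * R ^ 2, by positivity,
    min 1 (min (1 / (8 * R * Λ)) (δ * κ / (4 * R ^ 2))), by positivity, fun φ η hη hη' => ?_⟩
  rw [lt_min_iff, lt_min_iff, lt_div_iff₀ (by positivity), lt_div_iff₀ (by positivity)] at hη'
  obtain ⟨hη1, hη2, hη3⟩ := hη'
  set ρ := radius U φ with hρ
  have hρ0 : 0 < ρ := h.radius_pos hs φ
  have hρR : ρ ≤ R := hR φ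
  obtain ⟨p, hp, hpw⟩ := hsurj _ (h.radius_smul_mem hs φ)
  have hgr := hgrow p hp
  rw [hpw, ← hρ] at hgr
  set u' := uVec (φ + ε * η) with hu'
  have hsin0 : 0 < sin η := sin_pos_of_pos_of_lt_pi hη (by linarith [pi_gt_three])
  have hsin1 : sin η < η := sin_lt hη
  have hcos : 1 / 2 ≤ cos η := by nlinarith [one_sub_sq_div_two_le_cos (x := η)]
  have hsinε : sin (ε * η) = ε * sin η := by rcases hε with rfl | rfl <;> simp
  have hcosε : cos (ε * η) = cos η := by rcases hε with rfl | rfl <;> simp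
  set x : ℝ → ℝ × ℝ := fun c => bill K ε (c • p) with hx
  have hxc : Continuous x := (hK.continuous_bill hε0).comp (by fun_prop)
  have hx1 : x 1 = ρ • uVec φ := by simp only [hx, one_smul, hpw, hρ]
  have hxU : ∀ c, 1 ≤ c → x c ∉ U := fun c hc hcU => by
    have h1 := hs (hU _ hcU) c⁻¹ ⟨by positivity, inv_le_one_of_one_le₀ hc⟩
    rw [smul_smul, inv_mul_cancel₀ (by positivity), one_smul] at h1
    exact Set.disjoint_left.1 h.disj h1 hp
  -- the image curve starts on one side of the ray of angle `φ + ε * η` and ends on the other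
  have hstart : ε * detV u' (x 1) ≤ 0 := by
    have : ε * detV u' (x 1) = - (ρ * sin η) := by
      have h1 : detV u' (x 1) = - (ρ * sin (ε * η)) := by
        have h2 := detV_smul_smul 1 ρ u' (uVec φ)
        rw [one_smul, hu', detV_uVec, show φ - (φ + ε * η) = -(ε * η) by ring, sin_neg] at h2
        rw [hx1, hu', h2]
        ring
      rw [h1, hsinε]
      linear_combination (-ρ * sin η) * hεε
    rw [this]
    have : 0 < ρ * sin η := by positivity
    linarith
  have hend : 0 ≤ ε * detV u' (x (1 + δ)) := by
    obtain ⟨hg1, hg2⟩ := hgr (1 + δ) ⟨by linarith, le_rfl⟩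
    change _ ≤ ε * detV (ρ • uVec φ) (x (1 + δ)) at hg1
    change ‖x (1 + δ) - _‖ ≤ Λ * (ε * detV (ρ • uVec φ) (x (1 + δ))) at hg2
    set y := x (1 + δ)
    set D := ε * detV (ρ • uVec φ) y with hD
    have hy : ‖y‖ ≤ R + Λ * D := by
      have h1 : ‖ρ • uVec φ‖ ≤ ρ := by
        rw [norm_smul, Real.norm_of_nonneg hρ0.le]
        exact mul_le_of_le_one_right hρ0.le (norm_uVec_le φ)
      have h2 := norm_le_norm_add_norm_sub' y (ρ • uVec φ)
      linarith
    have hrot : ρ * (ε * detV u' y) =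
        cos η * D + sin η * (ρ * detV (uVec (φ + π / 2)) y) := by
      simp only [hD, hu', detV, uVec, Prod.smul_fst, Prod.smul_snd, smul_eq_mul, cos_add, sin_add,
        hsinε, hcosε, cos_pi_div_two, sin_pi_div_two]
      linear_combination (-ρ * sin η * (sin φ * y.2 + cos φ * y.1)) * hεε
    have hperp : -(2 * ‖y‖) ≤ detV (uVec (φ + π / 2)) y := by
      have h1 := abs_detV_le (uVec (φ + π / 2)) y
      have h2 := neg_abs_le (detV (uVec (φ + π / 2)) y)
      have h3 : ‖uVec (φ + π / 2)‖ * ‖y‖ ≤ ‖y‖ :=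
        mul_le_of_le_one_left (norm_nonneg _) (norm_uVec_le _)
      nlinarith
    have hD0 : 2 * δ * κ ≤ D := by linarith
    have hDpos : 0 < D := lt_of_lt_of_le (by positivity) hD0
    have h1 : sin η * (ρ * (2 * ‖y‖)) ≤ η * (R * (2 * (R + Λ * D))) := by gcongr
    have h2 : sin η * (ρ * -(2 * ‖y‖)) ≤ sin η * (ρ * detV (uVec (φ + π / 2)) y) := by gcongr
    have h3 : 1 / 2 * D ≤ cos η * D := by gcongr
    have h4 : η * (8 * R * Λ) * D ≤ 1 * D := by gcongr
    have : 0 ≤ ρ * (ε * detV u' y) := by rw [hrot]; nlinarith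
    exact nonneg_of_mul_nonneg_right this hρ0
  obtain ⟨c, hc, hc0⟩ := intermediate_value_Icc (by linarith : (1 : ℝ) ≤ 1 + δ)
    (f := fun c => ε * detV u' (x c))
    (continuous_const.mul (detV_continuous continuous_const hxc)).continuousOn ⟨hstart, hend⟩
  obtain ⟨s, hxs⟩ := eq_smul_of_detV_eq_zero (uVec_ne_zero _)
    ((mul_eq_zero.1 hc0).resolve_left hε0)
  obtain ⟨hg1, hg2⟩ := hgr c hc
  change _ ≤ ε * detV (ρ • uVec φ) (x c) at hg1
  change ‖x c - _‖ ≤ Λ * (ε * detV (ρ • uVec φ) (x c)) at hg2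
  have hD : ε * detV (ρ • uVec φ) (x c) = ρ * s * sin η := by
    rw [hxs, detV_smul_smul, detV_uVec, add_sub_cancel_left, hsinε]
    linear_combination (ρ * s * sin η) * hεε
  have hs0 : 0 ≤ s := by
    have h1 : 0 ≤ 2 * (c - 1) * κ := by
      have := hc.1
      have : 0 ≤ c - 1 := by linarith
      positivity
    rw [hD] at hg1
    have h2 : 0 ≤ (ρ * sin η) * s := by linarith
    exact nonneg_of_mul_nonneg_right h2 (by positivity)
  have hsρ : radius U (φ + ε * η) ≤ s := by
    by_contra! hlt
    exact hxU c hc.1 (hxs ▸ (h.smul_mem_iff hs hs0).2 hlt)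
  rw [hD, hxs] at hg2
  have h1 := (sub_le_norm_smul_uVec_sub s ρ φ (φ + ε * η) hρ0.le).trans
    (mul_le_mul_of_nonneg_left hg2 zero_le_two)
  have h2 : ρ * s * sin η ≤ R * s * η := by gcongr
  have h3 : Λ * (ρ * s * sin η) ≤ Λ * (R * s * η) := by gcongr
  have h4 : η * (8 * R * Λ) * s ≤ 1 * s := by gcongr
  have h5 : s ≤ 2 * R := by nlinarith
  have h6 : Λ * (R * s * η) ≤ Λ * (R * (2 * R) * η) := by gcongr
  nlinarith

/-- Steps in both directions give a local Lipschitz bound, and boundedness makes it global. -/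
lemma radius_lipschitz (h : Dom U C) (hs : U ⊆ starPart U) {L η₀ : ℝ} (hL : 0 < L) (hη₀ : 0 < η₀)
    (h1 : ∀ φ η, 0 < η → η < η₀ → radius U (φ + η) ≤ radius U φ + L * η)
    (h2 : ∀ φ η, 0 < η → η < η₀ → radius U (φ - η) ≤ radius U φ + L * η) :
    ∃ L : NNReal, LipschitzWith L (radius U) := by
  obtain ⟨R, hR0, hR⟩ := h.exists_radius_le hs
  have key : ∀ φ ψ, radius U ψ ≤ radius U φ + (L + R / η₀) * |φ - ψ| := by
    intro φ ψ
    have hA : 0 ≤ R / η₀ * |φ - ψ| := by positivity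
    rcases lt_or_ge |φ - ψ| η₀ with hlt | hge
    · rcases lt_trichotomy φ ψ with hφ | rfl | hφ
      · rw [abs_sub_comm, abs_of_pos (sub_pos.2 hφ)] at *
        have := h1 φ (ψ - φ) (sub_pos.2 hφ) hlt
        rw [add_sub_cancel] at this
        linarith
      · simp
      · rw [abs_of_pos (sub_pos.2 hφ)] at *
        have := h2 φ (φ - ψ) (sub_pos.2 hφ) hlt
        rw [sub_sub_cancel] at this
        linarith
    · have h3 : R / η₀ * η₀ ≤ R / η₀ * |φ - ψ| := by gcongr
      rw [div_mul_cancel₀ _ hη₀.ne'] at h3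
      have h4 : 0 ≤ L * |φ - ψ| := by positivity
      linarith [hR ψ, h.radius_pos hs φ]
  refine ⟨⟨L + R / η₀, by positivity⟩, LipschitzWith.of_dist_le_mul fun φ ψ => ?_⟩
  rw [Real.dist_eq, Real.dist_eq, abs_sub_le_iff]
  constructor
  · have := key ψ φ
    rw [abs_sub_comm] at this
    exact sub_left_le_of_le_add this
  · exact sub_left_le_of_le_add (key φ ψ)

end Dom

end Radius

/-! ### Surjectivity onto the circle -/

section Circle

/-- A `2π`-periodic curve on the circle whose values at `φ` and `φ + π` always differ is onto:
otherwise it lifts to a periodic function `Ψ`, and `Ψ (φ + π) - Ψ φ` changes sign. -/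
lemma surjective_of_antipodal {p : ℝ} [hp : Fact (0 < p)] {g : ℝ → AddCircle p} (hg : Continuous g)
    (hper : ∀ φ, g (φ + 2 * π) = g φ) (hanti : ∀ φ, g (φ + π) ≠ g φ) : Function.Surjective g := by
  intro t₀
  by_contra! hne
  obtain ⟨a, rfl⟩ := QuotientAddGroup.mk_surjective t₀
  set Ψ : ℝ → ℝ := fun φ => (AddCircle.equivIco p a (g φ) : ℝ) with hΨ
  have hΨc : Continuous Ψ := continuous_iff_continuousAt.2 fun φ =>
    (continuous_subtype_val.continuousAt.comp (AddCircle.continuousAt_equivIco p a (hne φ))).comp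
      hg.continuousAt
  have hΨi : ∀ φ, Ψ (φ + π) - Ψ φ ≠ 0 := fun φ h =>
    hanti φ ((AddCircle.equivIco p a).injective (Subtype.ext (sub_eq_zero.1 h)))
  have hΨπ : Ψ (π + π) = Ψ 0 := by
    have := hper 0
    rw [zero_add, two_mul] at this
    simp only [hΨ, this]
  have hχ : Continuous fun φ => Ψ (φ + π) - Ψ φ := by fun_prop
  obtain ⟨φ, hφ⟩ : ∃ φ, Ψ (φ + π) - Ψ φ = 0 := by
    rcases le_total (Ψ (0 + π) - Ψ 0) 0 with h | h
    · exact mem_range_of_exists_le_of_exists_ge hχ ⟨0, h⟩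
        ⟨π, by rw [hΨπ]; rw [zero_add] at h; linarith⟩
    · exact mem_range_of_exists_le_of_exists_ge hχ
        ⟨π, by rw [hΨπ]; rw [zero_add] at h; linarith⟩ ⟨0, h⟩
  exact hΨi φ hφ

end Circle

/-- Every continuous rotational (non-contractible) invariant curve of the
outer billiard map is a star-shaped Lipschitz polar graph. -/
theorem invariant_curve_is_lipschitz_polar_graph
    (K : Set (ℝ × ℝ)) (hconv : Convex ℝ K) (hcomp : IsCompact K)
    (hint : (interior K).Nonempty)
    (hbd : ∃ O r, HasC2PosCurvBoundary K O r)
    (hzero : (0 : ℝ × ℝ) ∈ interior K)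
    (T : ℝ × ℝ → ℝ × ℝ) (hT : IsOuterBilliard K T)
    (f : C(AddCircle (2 * π), (Kᶜ : Set (ℝ × ℝ)))) (hfi : Function.Injective f)
    (C : Set (ℝ × ℝ)) (hC : C = Subtype.val '' Set.range f)
    (hnc : ¬ ∃ c : (Kᶜ : Set (ℝ × ℝ)), ContinuousMap.Homotopic f (ContinuousMap.const _ c))
    (hTC : T '' C = C) :
    ∃ ρ : ℝ → ℝ, (∃ L : NNReal, LipschitzWith L ρ) ∧ (∀ φ, ρ (φ + 2 * π) = ρ φ) ∧
      (∀ φ, 0 < ρ φ) ∧ C = {p : ℝ × ℝ | ∃ φ, p = ρ φ • uVec φ} := by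
  have : Fact (0 < 2 * π) := ⟨two_pi_pos⟩
  have hK : Body K := hT.body hcomp hconv hzero
  obtain ⟨O, r, hr⟩ := hbd
  obtain ⟨γ, γ', γ'', hγ⟩ := hr.bdryCurve
  have hfc : Continuous fun t => (f t : ℝ × ℝ) := continuous_subtype_val.comp f.continuous
  have hCr : C = range fun t => (f t : ℝ × ℝ) := by rw [hC, ← range_comp]; rfl
  have hCc : IsCompact C := hCr ▸ isCompact_range hfc
  have hCconn : IsPreconnected C := hCr ▸ isPreconnected_range hfc
  have hCK : ∀ p ∈ C, p ∉ K := by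
    rw [hCr]
    rintro _ ⟨t, rfl⟩
    exact (f t).2
  have hinv : bill K 1 '' C = C :=
    (image_congr fun p hp => hK.eq_bill hT (hCK p hp)).symm.trans hTC
  set U := connectedComponentIn Cᶜ (0 : ℝ × ℝ) with hU
  have hTD : TwistDom U C K (hK.homeo one_ne_zero) 1 :=
    hγ.twistDom hK hCc.isClosed hCconn (Set.disjoint_left.2 hCK)
      (isBounded_component hcomp hconv hK.zero_mem f hC hnc) hinv
  have hs := hTD.subset_starPart_self
  have hdom := hTD.dom
  have hbb : ∀ x, bill K 1 (bill K (-1) x) = x := (hK.homeo one_ne_zero).apply_symm_apply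
  have hbb' : ∀ x, bill K (-1) (bill K 1 x) = x := (hK.homeo one_ne_zero).symm_apply_apply
  -- the billiard map bounds the radius counterclockwise of `φ`, its inverse clockwise
  obtain ⟨L₁, hL₁, η₁, hη₁, h₁⟩ := hdom.radius_step hs hK (.inl rfl) hCc hCK
    (fun x hx => (hTD.maps x).1 hx) (fun w hw => by rwa [← hinv] at hw)
  obtain ⟨L₂, hL₂, η₂, hη₂, h₂⟩ := hdom.radius_step hs hK (.inr rfl) hCc hCK
    (fun x hx => by rw [← hbb x]; exact (hTD.maps _).2 hx)
    (fun w hw => ⟨bill K 1 w, hinv ▸ mem_image_of_mem _ hw, hbb' w⟩)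
  have hfwd : ∀ φ η, 0 < η → η < min η₁ η₂ →
      radius U (φ + η) ≤ radius U φ + (L₁ + L₂) * η := fun φ η h0 hη => by
    have := h₁ φ η h0 (hη.trans_le (min_le_left _ _))
    rw [one_mul] at this
    nlinarith
  have hbwd : ∀ φ η, 0 < η → η < min η₁ η₂ →
      radius U (φ - η) ≤ radius U φ + (L₁ + L₂) * η := fun φ η h0 hη => by
    have := h₂ φ η h0 (hη.trans_le (min_le_right _ _))
    rw [neg_one_mul, ← sub_eq_add_neg] at this
    nlinarith
  obtain ⟨L, hL⟩ := hdom.radius_lipschitz hs (L := L₁ + L₂) (η₀ := min η₁ η₂) (by positivity)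
    (by positivity) hfwd hbwd
  -- `g` is the parameter on the circle of the boundary point of `U` of polar angle `φ`
  choose g hg using fun φ => (hCr ▸ hdom.radius_smul_mem hs φ : radius U φ • uVec φ ∈
    range fun t => (f t : ℝ × ℝ))
  have hgc : Continuous g := by
    have he := hfc.isClosedEmbedding (Subtype.val_injective.comp hfi)
    rw [he.isEmbedding.continuous_iff]
    have : (fun t => (f t : ℝ × ℝ)) ∘ g = fun φ => radius U φ • uVec φ := funext hg
    rw [this]
    exact hL.continuous.smul (contDiff_uVec (n := 1)).continuous
  have hgs := surjective_of_antipodal hgc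
    (fun φ => hfi (Subtype.ext ((hg _).trans ((by
      rw [radius_add_two_pi, uVec_add_two_pi] : _ = radius U φ • uVec φ).trans (hg φ).symm))))
    (fun φ h => by
      have h1 := (hg (φ + π)).symm.trans ((congrArg (fun t => (f t : ℝ × ℝ)) h).trans (hg φ))
      obtain ⟨-, h2, h3⟩ := smul_uVec_inj (hdom.radius_pos hs _) (hdom.radius_pos hs _) h1
      rw [cos_add_pi] at h2
      rw [sin_add_pi] at h3
      have := sin_sq_add_cos_sq φ
      nlinarith)
  refine ⟨radius U, ⟨L, hL⟩, radius_add_two_pi U, hdom.radius_pos hs, Subset.antisymm ?_ ?_⟩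
  · rw [hCr]
    rintro _ ⟨t, rfl⟩
    obtain ⟨φ, rfl⟩ := hgs t
    exact ⟨φ, hg φ⟩
  · rintro _ ⟨φ, rfl⟩
    exact hdom.radius_smul_mem hs φ
end
end

section
/- Let L : ℝ² → ℝ² be an invertible linear map, c ∈ ℝ², and let K := { c + L x : |x| ≤ 1 } be the corresponding filled ellipse. Then for every s > 1 the outer billiard map T of K maps the concentric homothetic ellipse E_s := { c + s L x : |x| = 1 } onto itself, i.e. T(E_s) = E_s; in particular, the exterior of K is foliated by invariant curves of T. -/
/-!
Pull everything back by the affine map `x ↦ c + L x`, so that `K` becomes the closed unit disk; only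
the orientation may change, and it is recorded by the sign of `d = det L`. Let `a` be a point with
`|a| = s > 1`, let `m` be the midpoint of `[a, b]` where `b` represents `T A`, and put `v = m - a`.
The disk lies on one side of the line through `m` with direction `v`; comparing the point of the
disk extremal in the direction normal to `v` with `m`, where `|m| ≤ 1`, forces `|m| = 1` and `v ⊥ m`.
Hence `a = m - τ J m` and `b = m + τ J m`, where `J` is the rotation by a right angle and `τ` is the
square root of `s² - 1` having the sign of `d` (`tangent_midpoint_coords`). In particular `|b| = |a| = s`.
Since `1 - τ J` is invertible, `a` determines `b` and conversely every `b` with `|b| = s` arises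
from `a = s⁻² (1 - τ J)² b`, which gives surjectivity.
-/

open Real MeasureTheory Set

noncomputable section

/-! ### Tangency to the unit disk -/

/-- A square root of `s² - 1` with the sign of `d`. -/
lemma exists_signed_sqrt {d s : ℝ} (hd : d ≠ 0) (hs : 1 < s) :
    ∃ τ : ℝ, τ ^ 2 = s ^ 2 - 1 ∧ 0 < d * τ := by
  have h : 0 < s ^ 2 - 1 := by nlinarith
  have hp := Real.sqrt_pos.2 h
  have hq := Real.sq_sqrt h.le
  rcases lt_or_gt_of_ne hd with hn | hn
  · exact ⟨-√(s ^ 2 - 1), by rw [neg_sq, hq], mul_pos_of_neg_of_neg hn (neg_lt_zero.2 hp)⟩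
  · exact ⟨√(s ^ 2 - 1), hq, mul_pos hn hp⟩

/-- The tangency computation for the unit disk: if the disk lies on one side of the line through
`m` with direction `m - a`, then `|m| = 1` and `a = m - τ J m`. -/
lemma tangent_midpoint_coords {d s τ a₁ a₂ m₁ m₂ : ℝ} (hd : d ≠ 0) (hs : 1 < s)
    (hτ : τ ^ 2 = s ^ 2 - 1) (hdτ : 0 < d * τ)
    (ha : a₁ ^ 2 + a₂ ^ 2 = s ^ 2) (hm : m₁ ^ 2 + m₂ ^ 2 ≤ 1)
    (H : ∀ x₁ x₂ : ℝ, x₁ ^ 2 + x₂ ^ 2 ≤ 1 →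
      0 ≤ d * ((m₁ - a₁) * (x₂ - m₂) - (m₂ - a₂) * (x₁ - m₁))) :
    m₁ ^ 2 + m₂ ^ 2 = 1 ∧ a₁ = m₁ + τ * m₂ ∧ a₂ = m₂ - τ * m₁ := by
  obtain ⟨v₁, rfl⟩ : ∃ v, a₁ = m₁ - v := ⟨m₁ - a₁, by ring⟩
  obtain ⟨v₂, rfl⟩ : ∃ v, a₂ = m₂ - v := ⟨m₂ - a₂, by ring⟩
  simp only [sub_sub_cancel] at H
  have hv : 0 < v₁ ^ 2 + v₂ ^ 2 := by
    by_contra hcon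
    have h1 : v₁ = 0 := by nlinarith [sq_nonneg v₁, sq_nonneg v₂]
    have h2 : v₂ = 0 := by nlinarith [sq_nonneg v₁, sq_nonneg v₂]
    subst h1 h2
    nlinarith
  -- `k (v₂, -v₁)` is the point of the disk lying farthest out on the side excluded by `H`.
  obtain ⟨k, hk, hdk⟩ : ∃ k : ℝ, k ^ 2 * (v₁ ^ 2 + v₂ ^ 2) = 1 ∧ 0 < d * k := by
    have hp := Real.sqrt_pos.2 hv
    have hq := Real.sq_sqrt hv.le
    rcases lt_or_gt_of_ne hd with hn | hn
    · refine ⟨-(√(v₁ ^ 2 + v₂ ^ 2))⁻¹, ?_, mul_pos_of_neg_of_neg hn (by simpa using hp)⟩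
      rw [neg_sq, inv_pow, hq, inv_mul_cancel₀ hv.ne']
    · refine ⟨(√(v₁ ^ 2 + v₂ ^ 2))⁻¹, ?_, mul_pos hn (by simpa using hp)⟩
      rw [inv_pow, hq, inv_mul_cancel₀ hv.ne']
  have hx := H (k * v₂) (-(k * v₁)) (by nlinarith)
  set N := v₁ ^ 2 + v₂ ^ 2 with hN
  set P := v₁ * m₂ - v₂ * m₁ with hP
  set Q := v₁ * m₁ + v₂ * m₂ with hQ
  have hLag : P ^ 2 + Q ^ 2 = N * (m₁ ^ 2 + m₂ ^ 2) := by rw [hP, hQ, hN]; ring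
  have hdP : d * k * N ≤ -(d * P) := by
    have : d * (v₁ * (-(k * v₁) - m₂) - v₂ * (k * v₂ - m₁)) = -(d * P) - d * k * N := by
      rw [hP, hN]; ring
    linarith
  have hd2 : 0 < d ^ 2 := by positivity
  have hdkN : 0 < d * k * N := mul_pos hdk hv
  have hPN : N ≤ P ^ 2 := by
    have h1 : (d * k * N) ^ 2 ≤ (-(d * P)) ^ 2 := pow_le_pow_left₀ hdkN.le hdP 2
    have h2 : (d * k * N) ^ 2 = d ^ 2 * N := by linear_combination d ^ 2 * N * hk
    have h3 : d ^ 2 * N ≤ d ^ 2 * P ^ 2 := by nlinarith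
    exact le_of_mul_le_mul_left h3 hd2
  -- Equality holds throughout in `N ≤ P² ≤ P² + Q² = N |m|² ≤ N`.
  have hm1 : m₁ ^ 2 + m₂ ^ 2 = 1 := by
    refine le_antisymm hm ?_
    by_contra hlt
    nlinarith [sq_nonneg Q]
  have hQ0 : Q = 0 := by
    rw [hm1, mul_one] at hLag
    have : Q ^ 2 ≤ 0 := by linarith
    exact pow_eq_zero_iff two_ne_zero |>.1 (le_antisymm this (sq_nonneg Q))
  have hNτ : N = τ ^ 2 := by rw [hτ]; linear_combination ha - hm1 + 2 * hQ0 + hN - 2 * hQ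
  have hPτ : P = -τ := by
    have h1 : (P - τ) * (P + τ) = 0 := by
      rw [hm1, hQ0] at hLag; linear_combination hLag + hNτ
    rcases mul_eq_zero.1 h1 with h | h
    · exfalso
      have : P = τ := by linarith
      rw [this] at hdP
      linarith
    · linarith
  refine ⟨hm1, ?_, ?_⟩
  · linear_combination -m₁ * hQ0 - m₂ * hPτ + v₁ * hm1 + m₁ * hQ + m₂ * hP
  · linear_combination -m₂ * hQ0 + m₁ * hPτ + v₂ * hm1 + m₂ * hQ - m₁ * hP

/-! ### Transport by the affine map -/

lemma detV_map (L : (ℝ × ℝ) →ₗ[ℝ] ℝ × ℝ) (u v : ℝ × ℝ) :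
    detV (L u) (L v) = detV (L (1, 0)) (L (0, 1)) * detV u v := by
  have h : ∀ w : ℝ × ℝ, L w = w.1 • L (1, 0) + w.2 • L (0, 1) := by
    intro w
    rw [← map_smul, ← map_smul, ← map_add]
    congr 1
    ext <;> simp
  rw [h u, h v]
  simp only [detV, Prod.fst_add, Prod.snd_add, Prod.smul_fst, Prod.smul_snd, smul_eq_mul]
  ring

lemma detV_basis_ne_zero (L : (ℝ × ℝ) →ₗ[ℝ] ℝ × ℝ) (hL : Function.Bijective L) :
    detV (L (1, 0)) (L (0, 1)) ≠ 0 := by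
  intro h
  obtain ⟨u, hu⟩ := hL.2 (1, 0)
  obtain ⟨v, hv⟩ := hL.2 (0, 1)
  have := detV_map L u v
  rw [hu, hv, h] at this
  simp [detV] at this

/-- In the coordinates `x ↦ c + L x`, the outer billiard map sends `a` to `2 m - a = m + τ J m`,
where `m` is the unit vector with `a = m - τ J m`. -/
lemma outer_billiard_coords
    (L : (ℝ × ℝ) →ₗ[ℝ] ℝ × ℝ) (hL : Function.Bijective L) (c : ℝ × ℝ)
    (K : Set (ℝ × ℝ))
    (hK : K = (fun x => c + L x) '' {x : ℝ × ℝ | x.1 ^ 2 + x.2 ^ 2 ≤ 1})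
    (T : ℝ × ℝ → ℝ × ℝ) (hT : IsOuterBilliard K T) {s τ : ℝ} (hs : 1 < s)
    (hτ : τ ^ 2 = s ^ 2 - 1) (hdτ : 0 < detV (L (1, 0)) (L (0, 1)) * τ)
    (a : ℝ × ℝ) (ha : a.1 ^ 2 + a.2 ^ 2 = s ^ 2) :
    ∃ m : ℝ × ℝ, m.1 ^ 2 + m.2 ^ 2 = 1 ∧ a.1 = m.1 + τ * m.2 ∧ a.2 = m.2 - τ * m.1 ∧
      T (c + L a) = c + L (m.1 - τ * m.2, m.2 + τ * m.1) := by
  have hA : c + L a ∉ K := by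
    rw [hK]
    rintro ⟨x, hx, hxa⟩
    have : x = a := hL.1 (add_left_cancel hxa)
    subst this
    have hx' : x.1 ^ 2 + x.2 ^ 2 ≤ 1 := hx
    nlinarith
  obtain ⟨-, -, hseg, hside⟩ := hT _ hA
  have hmK : (1 / 2 : ℝ) • (c + L a + T (c + L a)) ∈ K := by
    have : (1 / 2 : ℝ) • (c + L a + T (c + L a)) ∈ segment ℝ (c + L a) (T (c + L a)) ∩ K := by
      rw [hseg]; rfl
    exact this.2
  rw [hK] at hmK
  obtain ⟨m, hm, hmT⟩ := hmK
  have hm' : m.1 ^ 2 + m.2 ^ 2 ≤ 1 := hm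
  have hmT' : c + L m = (1 / 2 : ℝ) • (c + L a + T (c + L a)) := hmT
  have hTA : T (c + L a) = c + L ((2 : ℝ) • m - a) := by
    have h2 : (2 : ℝ) • (c + L m) = c + L a + T (c + L a) := by
      rw [hmT', smul_smul]; norm_num
    rw [map_sub, map_smul, ← sub_eq_iff_eq_add'.2 h2]
    module
  have key := tangent_midpoint_coords (detV_basis_ne_zero L hL) hs hτ hdτ ha hm' (by
    intro x₁ x₂ hx
    have h := hside (c + L (x₁, x₂)) (by rw [hK]; exact ⟨(x₁, x₂), hx, rfl⟩)
    rw [← hmT', hTA, add_sub_add_left_eq_sub, add_sub_add_left_eq_sub, ← map_sub, ← map_sub,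
      detV_map] at h
    have e : detV ((2 : ℝ) • m - a - a) ((x₁, x₂) - m)
        = 2 * ((m.1 - a.1) * (x₂ - m.2) - (m.2 - a.2) * (x₁ - m.1)) := by
      simp only [detV, Prod.fst_sub, Prod.snd_sub, Prod.smul_fst, Prod.smul_snd, smul_eq_mul]
      ring
    rw [e] at h
    linarith)
  refine ⟨m, key.1, key.2.1, key.2.2, ?_⟩
  rw [hTA]
  congr 2
  ext
  · simp only [Prod.fst_sub, Prod.smul_fst, smul_eq_mul]; linarith [key.2.1]
  · simp only [Prod.snd_sub, Prod.smul_snd, smul_eq_mul]; linarith [key.2.2]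

/-! ### Homothetic ellipses -/

/-- `E_s` is the image under `x ↦ c + L x` of the circle of radius `s`. -/
lemma homothet_eq (L : (ℝ × ℝ) →ₗ[ℝ] ℝ × ℝ) (c : ℝ × ℝ) {s : ℝ} (hs : 1 < s) :
    (fun x => c + s • L x) '' {x : ℝ × ℝ | x.1 ^ 2 + x.2 ^ 2 = 1}
      = (fun x => c + L x) '' {x : ℝ × ℝ | x.1 ^ 2 + x.2 ^ 2 = s ^ 2} := by
  have hs0 : s ≠ 0 := by linarith
  ext p
  constructor
  · rintro ⟨x, hx, rfl⟩
    have hx' : x.1 ^ 2 + x.2 ^ 2 = 1 := hx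
    refine ⟨s • x, ?_, by simp⟩
    simp only [mem_ofPred_eq, Prod.smul_fst, Prod.smul_snd, smul_eq_mul]
    linear_combination s ^ 2 * hx'
  · rintro ⟨x, hx, rfl⟩
    have hx' : x.1 ^ 2 + x.2 ^ 2 = s ^ 2 := hx
    refine ⟨s⁻¹ • x, ?_, by simp [smul_smul, hs0]⟩
    simp only [mem_ofPred_eq, Prod.smul_fst, Prod.smul_snd, smul_eq_mul, mul_pow]
    rw [← mul_add, hx', ← mul_pow, inv_mul_cancel₀ hs0, one_pow]

/-- For a filled ellipse `K = c + L(closed unit disk)`, the outer billiard map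
preserves each concentric homothetic ellipse `E_s = c + s L(unit circle)`, `s > 1`; in
particular these invariant curves foliate the exterior of `K`. -/
theorem outer_billiard_of_ellipse_preserves_homothets
    (L : (ℝ × ℝ) →ₗ[ℝ] ℝ × ℝ) (hL : Function.Bijective L) (c : ℝ × ℝ)
    (K : Set (ℝ × ℝ))
    (hK : K = (fun x => c + L x) '' {x : ℝ × ℝ | x.1 ^ 2 + x.2 ^ 2 ≤ 1})
    (T : ℝ × ℝ → ℝ × ℝ) (hT : IsOuterBilliard K T) :
    (∀ s : ℝ, 1 < s →
      T '' ((fun x => c + s • L x) '' {x : ℝ × ℝ | x.1 ^ 2 + x.2 ^ 2 = 1})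
        = (fun x => c + s • L x) '' {x : ℝ × ℝ | x.1 ^ 2 + x.2 ^ 2 = 1}) ∧
    (⋃ s ∈ Set.Ioi (1 : ℝ),
        (fun x => c + s • L x) '' {x : ℝ × ℝ | x.1 ^ 2 + x.2 ^ 2 = 1}) = Kᶜ := by
  refine ⟨fun s hs => ?_, ?_⟩
  · obtain ⟨τ, hτ, hdτ⟩ := exists_signed_sqrt (detV_basis_ne_zero L hL) hs
    have hs0 : s ^ 2 ≠ 0 := by positivity
    rw [homothet_eq L c hs]
    ext p
    constructor
    · rintro ⟨_, ⟨a, ha, rfl⟩, rfl⟩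
      obtain ⟨m, hm, -, -, hTa⟩ := outer_billiard_coords L hL c K hK T hT hs hτ hdτ a ha
      refine ⟨_, ?_, hTa.symm⟩
      simp only [mem_ofPred_eq]
      linear_combination (1 + τ ^ 2) * hm + hτ
    · rintro ⟨b, hb, rfl⟩
      have hb' : b.1 ^ 2 + b.2 ^ 2 = s ^ 2 := hb
      -- `n = s⁻² (1 - τ J) b` is the unit vector with `b = n + τ J n`.
      obtain ⟨n₁, hn₁⟩ : ∃ n, s ^ 2 * n = b.1 + τ * b.2 := ⟨(b.1 + τ * b.2) / s ^ 2, by field_simp⟩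
      obtain ⟨n₂, hn₂⟩ : ∃ n, s ^ 2 * n = b.2 - τ * b.1 := ⟨(b.2 - τ * b.1) / s ^ 2, by field_simp⟩
      have hb1 : b.1 = n₁ - τ * n₂ := by
        apply mul_left_cancel₀ hs0
        linear_combination -hn₁ + τ * hn₂ - b.1 * hτ
      have hb2 : b.2 = n₂ + τ * n₁ := by
        apply mul_left_cancel₀ hs0
        linear_combination -hn₂ - τ * hn₁ - b.2 * hτ
      have hn : s ^ 2 * (n₁ ^ 2 + n₂ ^ 2) = s ^ 2 := by
        rw [hb1, hb2] at hb'
        linear_combination hb' - (n₁ ^ 2 + n₂ ^ 2) * hτ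
      have ha : (n₁ + τ * n₂) ^ 2 + (n₂ - τ * n₁) ^ 2 = s ^ 2 := by
        linear_combination hn + (n₁ ^ 2 + n₂ ^ 2) * hτ
      obtain ⟨m, -, h1, h2, hTa⟩ := outer_billiard_coords L hL c K hK T hT hs hτ hdτ
        (n₁ + τ * n₂, n₂ - τ * n₁) ha
      refine ⟨_, ⟨_, ha, rfl⟩, hTa.trans ?_⟩
      simp only at h1 h2
      -- Injectivity of `1 - τ J`.
      have e1 : m.1 = n₁ := by
        apply mul_left_cancel₀ hs0
        linear_combination -h1 + τ * h2 - (m.1 - n₁) * hτ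
      have e2 : m.2 = n₂ := by
        apply mul_left_cancel₀ hs0
        linear_combination -h2 - τ * h1 - (m.2 - n₂) * hτ
      rw [e1, e2, ← hb1, ← hb2]
  · ext p
    simp only [mem_iUnion, mem_Ioi, mem_compl_iff, exists_prop]
    constructor
    · rintro ⟨s, hs, hp⟩ hpK
      rw [homothet_eq L c hs] at hp
      rw [hK] at hpK
      obtain ⟨x, hx, rfl⟩ := hp
      obtain ⟨y, hy, hyx⟩ := hpK
      have : y = x := hL.1 (add_left_cancel hyx)
      subst this
      simp only [mem_ofPred_eq] at hx hy
      nlinarith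
    · intro hp
      obtain ⟨y, hy⟩ := hL.2 (p - c)
      have hpy : c + L y = p := by rw [hy]; abel
      have hy1 : 1 < y.1 ^ 2 + y.2 ^ 2 := by
        by_contra hcon
        exact hp (by rw [hK]; exact ⟨y, not_lt.1 hcon, hpy⟩)
      have hs : 1 < √(y.1 ^ 2 + y.2 ^ 2) := Real.lt_sqrt_of_sq_lt (by simpa using hy1)
      refine ⟨_, hs, ?_⟩
      rw [homothet_eq L c hs]
      exact ⟨y, (Real.sq_sqrt (by positivity)).symm, hpy⟩
end
end
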